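/- Let (X,d,μ) be a metric measure space with finite Hausdorff dimension. Suppose that μ(S ∩ ind φ) = 0 for every n ∈ ℕ, every Lipschitz φ : X → ℝⁿ and every S ∈ 𝒮(φ). Then (X,d,μ) is a Lipschitz differentiability space, and the charts can be chosen with every chart dimension n_i ≤ dim_H X. -/

import Mathlib

open MeasureTheory Metric Set Filter Topology ENNReal NNReal
open scoped RealInnerProductSpace

noncomputable section

namespace BKO

/-- `ℝⁿ` with the Euclidean metric. -/
abbrev E (n : ℕ) : Type := EuclideanSpace ℝ (Fin n)

variable {X : Type*} [MetricSpace X]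

/-- A set `G ⊆ ℝ × X` is the graph of a curve fragment if all first coordinates lie
in `[0,1]` and it is the graph of a `2`-biLipschitz function defined on a subset of `[0,1]`. -/
def IsFragmentGraph (X : Type*) [MetricSpace X] (G : Set (ℝ × X)) : Prop :=
  (∀ p ∈ G, p.1 ∈ Set.Icc (0:ℝ) 1) ∧
  ∀ p ∈ G, ∀ q ∈ G, |p.1 - q.1| ≤ 2 * dist p.2 q.2 ∧ dist p.2 q.2 ≤ 2 * |p.1 - q.1|

/-- The space `Γ(X)` of curve fragments, identified with their graphs (nonempty compact
subsets of `[0,1] × X`), with the Hausdorff metric `d_Γ(γ₁,γ₂) = d_H(gr γ₁, gr γ₂)`. -/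
def Fragment (X : Type*) [MetricSpace X] : Type _ :=
  {G : TopologicalSpace.NonemptyCompacts (ℝ × X) // IsFragmentGraph X (G : Set (ℝ × X))}

instance : MetricSpace (Fragment X) :=
  inferInstanceAs (MetricSpace {G : TopologicalSpace.NonemptyCompacts (ℝ × X) // _})

instance : MeasurableSpace (Fragment X) := borel _
instance : BorelSpace (Fragment X) := ⟨rfl⟩

namespace Fragment

/-- The graph of a curve fragment. -/
def graph (γ : Fragment X) : Set (ℝ × X) := (γ.1 : Set (ℝ × X))

/-- The (compact) domain of a curve fragment. -/
def dom (γ : Fragment X) : Set ℝ := Prod.fst '' γ.graph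

/-- The image of a curve fragment. -/
def im (γ : Fragment X) : Set X := Prod.snd '' γ.graph

/-- The function `dom γ → X` determined by the graph (junk value off the domain). -/
def fn (γ : Fragment X) (t : ℝ) : X :=
  @dite X (∃ x, (t, x) ∈ γ.graph) (Classical.dec _)
    (fun h => h.choose) (fun _ => γ.1.nonempty.choose.2)

/-- `γ_* 𝓛¹`: the pushforward under `γ` of Lebesgue measure restricted to `dom γ`. -/
def measure [MeasurableSpace X] (γ : Fragment X) : Measure X :=
  (volume.restrict γ.dom).map γ.fn

end Fragment

/-- The measure `ν(ℙ)`, `ν(ℙ)(B) = ∫ γ_*𝓛¹(B) dℙ(γ)`. -/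
def nu [MeasurableSpace X] (ℙ : Measure (Fragment X)) : Measure X :=
  ℙ.bind Fragment.measure

/-- The cone `C(w,θ) = {v : |⟨v,w⟩| ≥ θ‖v‖}`. -/
def cone {n : ℕ} (w : E n) (θ : ℝ) : Set (E n) := {v | θ * ‖v‖ ≤ |⟪v, w⟫|}

/-- A cone in `ℝⁿ` is a set of the form `C(w,θ)` with `w ∈ Sⁿ⁻¹`, `θ ∈ (0,1)`. -/
def IsCone {n : ℕ} (C : Set (E n)) : Prop :=
  ∃ (w : E n) (θ : ℝ), ‖w‖ = 1 ∧ θ ∈ Set.Ioo (0:ℝ) 1 ∧ C = cone w θ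

/-- `γ` is a `C`-curve with respect to `φ`. -/
def IsConeCurve {n : ℕ} (φ : X → E n) (C : Set (E n)) (γ : Fragment X) : Prop :=
  ∃ δ > (0:ℝ), ∀ p ∈ γ.graph, ∀ q ∈ γ.graph,
    φ p.2 - φ q.2 ∈ C \ Metric.ball 0 (δ * |p.1 - q.1|)

/-- `ℙ` is a `C`-Alberti representation of `μ` with respect to `φ`. -/
def IsConeAlbertiRep [MeasurableSpace X] {n : ℕ} (μ : Measure X) (φ : X → E n)
    (C : Set (E n)) (ℙ : Measure (Fragment X)) : Prop :=
  IsProbabilityMeasure ℙ ∧ μ ≪ nu ℙ ∧ ∀ᵐ γ ∂ℙ, IsConeCurve φ C γ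

/-- `S` is `C`-null with respect to `φ`: every `C`-curve meets `S` in `𝓗¹`-measure zero. -/
def ConeNull [MeasurableSpace X] [BorelSpace X] {n : ℕ} (φ : X → E n) (C : Set (E n))
    (S : Set X) : Prop :=
  ∀ γ : Fragment X, IsConeCurve φ C γ → μH[1] (γ.im ∩ S) = 0

/-- Cones `C₁,…,C_m` are independent. -/
def IndepCones {n m : ℕ} (C : Fin m → Set (E n)) : Prop :=
  ∀ v : Fin m → E n, (∀ i, v i ∈ C i ∧ v i ≠ 0) → LinearIndependent ℝ v

/-- `μ` has `n` independent Alberti representations. -/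
def HasIndepAlberti [MeasurableSpace X] (μ : Measure X) (n : ℕ) : Prop :=
  ∃ φ : X → E n, (∃ K, LipschitzWith K φ) ∧ ∃ C : Fin n → Set (E n),
    (∀ i, IsCone (C i)) ∧ IndepCones C ∧ ∀ i, ∃ ℙ, IsConeAlbertiRep μ φ (C i) ℙ

/-- The collection `𝒮(φ)` of singular sets. -/
def MemScal [MeasurableSpace X] [BorelSpace X] {n : ℕ} (φ : X → E n) (S : Set X) : Prop :=
  MeasurableSet S ∧ ∀ θ ∈ Set.Ioo (0:ℝ) 1, ∃ (m : ℕ) (S' : Fin m → Set X) (w : Fin m → E n),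
    S = (⋃ i, S' i) ∧ ∀ i, MeasurableSet (S' i) ∧ ‖w i‖ = 1 ∧ ConeNull φ (cone (w i) θ) (S' i)

/-- `Lip(f,x) = limsup_{r→0⁺} sup_{d(x,y)≤r} |f(y)-f(x)|/r`. -/
def lipAt (f : X → ℝ) (x : X) : ℝ :=
  Filter.limsup (fun r : ℝ => sSup ((fun y => |f y - f x| / r) '' Metric.closedBall x r))
    (𝓝[>] (0:ℝ))

/-- `ind φ = {x : Lip(D⬝φ, x) > 0 for all D ∈ Sⁿ⁻¹}`. -/
def indSet {n : ℕ} (φ : X → E n) : Set X :=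
  {x | ∀ D : E n, ‖D‖ = 1 → 0 < lipAt (fun y => ⟪φ y, D⟫) x}

/-- `f` is differentiable with respect to `φ` at `x₀`, with a unique derivative. -/
def DiffWrtAt {n : ℕ} (φ : X → E n) (f : X → ℝ) (x₀ : X) : Prop :=
  ∃! L : E n →ₗ[ℝ] ℝ,
    Filter.Tendsto (fun x => |f x - f x₀ - L (φ x - φ x₀)| / dist x x₀) (𝓝[≠] x₀) (𝓝 0)

/-- `(X,d,μ)` is a Lipschitz differentiability space, with all chart dimensions
satisfying the predicate `P`. -/
def IsLipDiffSpaceWith [MeasurableSpace X] (μ : Measure X) (P : ℕ → Prop) : Prop :=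
  ∃ (N : ℕ → ℕ) (U : ℕ → Set X) (φ : (i : ℕ) → X → E (N i)),
    (∀ i, P (N i)) ∧ (∀ i, MeasurableSet (U i)) ∧ (⋃ i, U i) = Set.univ ∧
    (∀ i, ∃ K, LipschitzWith K (φ i)) ∧
    ∀ f : X → ℝ, (∃ K, LipschitzWith K f) →
      ∀ i, ∀ᵐ x ∂μ, x ∈ U i → DiffWrtAt (φ i) f x

/-- `ρ` is an upper gradient of `f`. -/
def IsUpperGradient (f ρ : X → ℝ) : Prop :=
  ∀ γ : ℝ → X, LipschitzOnWith 1 γ (Set.Icc 0 1) →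
    |f (γ 1) - f (γ 0)| ≤ ∫ t in Set.Icc (0:ℝ) 1, ρ (γ t)

/-- `ρ` is a `*`-upper gradient of `f`. -/
def IsStarUpperGradient (f ρ : X → ℝ) : Prop :=
  ∀ γ : Fragment X, LipschitzOnWith 1 γ.fn γ.dom →
    ∀ᵐ t ∂(volume.restrict γ.dom),
      ∀ v : ℝ, HasDerivWithinAt (f ∘ γ.fn) v γ.dom t → |v| ≤ ρ (γ.fn t)

/-- The dyadic cube of side length `2^{-m}` in `[0,1)ⁿ` indexed by `k`. -/
def dyadicCube (n m : ℕ) (k : Fin n → Fin (2 ^ m)) : Set (E n) :=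
  {x | ∀ i, (k i : ℝ) / 2 ^ m ≤ x i ∧ x i < ((k i : ℝ) + 1) / 2 ^ m}

variable {X : Type*} [MetricSpace X] [CompleteSpace X] [TopologicalSpace.SeparableSpace X]
  [MeasurableSpace X] [BorelSpace X]

/-!
A Lipschitz `φ : X → ℝⁿ` with `n > dim_H X` satisfies `X ∈ 𝒮(φ)`. Indeed `φ(X)` is `𝓗ˢ`-null for
some `s < n`, so each of its points lies, for infinitely many `k`, in one of `O(2^{ks})` dyadic
cubes of side `2^{-k}`. A discrete multilinear Kakeya inequality (Loomis–Whitney at each scale, with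
a small loss from one scale to the next) shows that the cubes in which `n` transversal families of
rich tubes meet are rare. By induction on `s`, every cube can be assigned one of finitely
many directions such that curves close to that direction meet few of the cubes assigned to it. By
Borel–Cantelli along curves, the corresponding pieces of `X` are cone-null.

Hence `μ(ind φ) = 0` for every such `φ`. For each `n` some countable union `Gₙ` of sets `ind φ`,
`φ : X → ℝⁿ`, contains every other such set up to measure zero. Since `G₀ = X` and `G_N` is null for
large `N`, almost every point lies in some `ind φ \ Gₙ₊₁` with `φ : X → ℝⁿ`. There `φ` is a chart:
for `f` Lipschitz, `(φ, f)` is almost nowhere independent, and the linear relation between `φ` and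
`f` is the derivative of `f`.
-/

/-! ### Multilinear Kakeya on a grid -/

section LoomisWhitney

variable {ι α : Type*} [Fintype ι] [DecidableEq ι] [Fintype α]

lemma sum_prod_sum_update_rpow_le (hι : 1 < Fintype.card ι) (f : (ι → α) → ℝ≥0∞) :
    ∑ x, ∏ i, (∑ t, f (Function.update x i t)) ^ (1 / ((Fintype.card ι : ℝ) - 1)) ≤
      (∑ x, f x) ^ ((Fintype.card ι : ℝ) / (Fintype.card ι - 1)) := by
  let _ : MeasurableSpace α := ⊤
  have hconj := Real.HolderConjugate.conjExponent (p := Fintype.card ι) (by exact_mod_cast hι)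
  simpa only [Real.conjExponent, lintegral_fintype, Measure.pi_singleton,
    Measure.count_singleton, mul_one, Finset.prod_const_one] using
    lintegral_prod_lintegral_pow_le (A := fun _ : ι => α) (fun _ => Measure.count) hconj
      (measurable_of_finite f)

variable {g : ι → (ι → α) → ℝ≥0∞}

lemma sum_prod_rpow_le_card_rpow (hι : 1 < Fintype.card ι)
    (hg : ∀ i x t, g i (Function.update x i t) = g i x)
    (hsum : ∀ i, ∑ x, g i x ≤ Fintype.card α) :
    ∑ x, ∏ i, g i x ^ (1 / ((Fintype.card ι : ℝ) - 1)) ≤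
      (Fintype.card ι : ℝ≥0∞) ^ ((Fintype.card ι : ℝ) / (Fintype.card ι - 1)) := by
  have hsub : (0 : ℝ) < Fintype.card ι - 1 := sub_pos.2 (Nat.one_lt_cast.2 hι)
  have hp : (0 : ℝ) ≤ Fintype.card ι / (Fintype.card ι - 1) := by positivity
  have : Nonempty ι := Fintype.card_pos_iff.1 (zero_lt_one.trans hι)
  rcases isEmpty_or_nonempty α with hα | hα
  · simp
  have hfiber (x : ι → α) (i : ι) :
      Fintype.card α * g i x ≤ ∑ t, ∑ j, g j (Function.update x i t) :=
    calc Fintype.card α * g i x = ∑ t : α, g i (Function.update x i t) := by simp [hg]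
      _ ≤ _ := Finset.sum_le_sum fun t _ => Finset.single_le_sum
          (f := fun j => g j (Function.update x i t)) (fun _ _ => zero_le) (Finset.mem_univ i)
  have htotal : ∑ x, ∑ i, g i x ≤ Fintype.card α * Fintype.card ι := by
    rw [Finset.sum_comm, mul_comm]
    simpa using Finset.sum_le_card_nsmul Finset.univ _ _ fun i _ => hsum i
  have hloomis := calc
    ∑ x, ∏ i, (Fintype.card α * g i x) ^ (1 / ((Fintype.card ι : ℝ) - 1))
      ≤ ∑ x, ∏ i, (∑ t, ∑ j, g j (Function.update x i t)) ^ (1 / ((Fintype.card ι : ℝ) - 1)) := by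
        gcongr with x _ i _
        exact hfiber x i
    _ ≤ (∑ x, ∑ i, g i x) ^ ((Fintype.card ι : ℝ) / (Fintype.card ι - 1)) :=
        sum_prod_sum_update_rpow_le hι fun x => ∑ i, g i x
    _ ≤ (Fintype.card α * Fintype.card ι) ^ ((Fintype.card ι : ℝ) / (Fintype.card ι - 1)) := by
        gcongr
  have hexp : 1 / ((Fintype.card ι : ℝ) - 1) * Fintype.card ι =
      Fintype.card ι / (Fintype.card ι - 1) := by ring
  simp_rw [ENNReal.mul_rpow_of_nonneg _ _ (one_div_pos.2 hsub).le, Finset.prod_mul_distrib,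
    Finset.prod_const, Finset.card_univ, ← ENNReal.rpow_mul_natCast, ← Finset.mul_sum, hexp,
    ENNReal.mul_rpow_of_nonneg _ _ hp] at hloomis
  rwa [ENNReal.mul_le_mul_iff_right (by simp) (by simp)] at hloomis

theorem loomis_whitney_rpow_le {G : ι → ℝ≥0∞} (hι : 1 < Fintype.card ι)
    (hg : ∀ i x t, g i (Function.update x i t) = g i x) (hG : ∀ i, G i ≠ ⊤)
    (hsum : ∀ i, ∑ x, g i x ≤ Fintype.card α * G i) :
    ∑ x, ∏ i, g i x ^ (1 / ((Fintype.card ι : ℝ) - 1)) ≤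
      (Fintype.card ι : ℝ≥0∞) ^ ((Fintype.card ι : ℝ) / (Fintype.card ι - 1)) *
        ∏ i, G i ^ (1 / ((Fintype.card ι : ℝ) - 1)) := by
  have hexp : 0 ≤ 1 / ((Fintype.card ι : ℝ) - 1) :=
    one_div_nonneg.2 (sub_nonneg.2 (by exact_mod_cast hι.le))
  have hscale (i : ι) (x : ι → α) : g i x = (G i)⁻¹ * g i x * G i := by
    rcases eq_or_ne (G i) 0 with h0 | h0
    · have := hsum i
      rw [h0, mul_zero, nonpos_iff_eq_zero, Finset.sum_eq_zero_iff] at this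
      simp [this x (Finset.mem_univ x)]
    · rw [mul_right_comm, ENNReal.inv_mul_cancel h0 (hG i), one_mul]
  have hnormalized : ∑ x, ∏ i, ((G i)⁻¹ * g i x) ^ (1 / ((Fintype.card ι : ℝ) - 1)) ≤
      (Fintype.card ι : ℝ≥0∞) ^ ((Fintype.card ι : ℝ) / (Fintype.card ι - 1)) := by
    refine sum_prod_rpow_le_card_rpow hι (fun i x t => by rw [hg]) fun i => ?_
    calc ∑ x, (G i)⁻¹ * g i x ≤ (G i)⁻¹ * (Fintype.card α * G i) := by
          rw [← Finset.mul_sum]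
          gcongr
          exact hsum i
      _ = Fintype.card α * ((G i)⁻¹ * G i) := by ring
      _ ≤ Fintype.card α := mul_le_of_le_one_right' (ENNReal.inv_mul_le_one _)
  calc ∑ x, ∏ i, g i x ^ (1 / ((Fintype.card ι : ℝ) - 1))
      = (∑ x, ∏ i, ((G i)⁻¹ * g i x) ^ (1 / ((Fintype.card ι : ℝ) - 1))) *
          ∏ i, G i ^ (1 / ((Fintype.card ι : ℝ) - 1)) := by
        simp_rw [Finset.sum_mul, ← Finset.prod_mul_distrib, ← ENNReal.mul_rpow_of_nonneg _ _ hexp,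
          ← hscale]
    _ ≤ _ := by gcongr

end LoomisWhitney

section Grid

variable {ι P : Type*}

/-- The cell of side `r` of the standard grid containing `b p`. -/
def gridCell (b : P → ι → ℝ) (r : ℝ) (p : P) : ι → ℤ :=
  fun i => ⌊b p i / r⌋

open Classical in
/-- The members of `𝒯` meeting the grid cell `c`. -/
def hits (b : P → ι → ℝ) (r : ℝ) (𝒯 : Finset (Finset P)) (c : ι → ℤ) : Finset (Finset P) :=
  {T ∈ 𝒯 | ∃ p ∈ T, gridCell b r p = c}

/-- In the coordinates `b`, the points of `T` lie within unit distance of a line whose slope with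
respect to the `j`-th axis is at most `1 / L`. -/
def IsAxialTube (b : P → ι → ℝ) (L : ℝ) (j : ι) (T : Finset P) : Prop :=
  ∀ p ∈ T, ∀ q ∈ T, ∀ i ≠ j, |b p i - b q i| ≤ |b p j - b q j| / L + 1

/-- The `x`-th of the cells of side `r` subdividing the cell `c` of side `L * r`. -/
def subcell (L : ℕ) (c : ι → ℤ) (x : ι → Fin L) : ι → ℤ :=
  fun i => L * c i + x i

variable {b : P → ι → ℝ} {r : ℝ} {L : ℕ} {c : ι → ℤ} {p q : P} {i j : ι} {T : Finset P}

lemma mem_hits {𝒯 : Finset (Finset P)} :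
    T ∈ hits b r 𝒯 c ↔ T ∈ 𝒯 ∧ ∃ p ∈ T, gridCell b r p = c := by
  simp only [hits, Finset.mem_filter]

lemma hits_subset (b : P → ι → ℝ) (r : ℝ) (𝒯 : Finset (Finset P)) (c : ι → ℤ) :
    hits b r 𝒯 c ⊆ 𝒯 :=
  fun _ hT => (mem_hits.1 hT).1

lemma gridCell_natCast_mul (b : P → ι → ℝ) (r : ℝ) (L : ℕ) (p : P) (i : ι) :
    gridCell b (L * r) p i = gridCell b r p i / L := by
  simp only [gridCell, mul_comm (L : ℝ), ← div_div, Int.floor_div_natCast]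

lemma abs_sub_lt_of_gridCell_eq (hr : 0 < r) (h : gridCell b r p i = gridCell b r q i) :
    |b p i - b q i| < r := by
  have := Int.abs_sub_lt_one_of_floor_eq_floor h
  rwa [← _root_.sub_div, abs_div, abs_of_pos hr, div_lt_one hr] at this

lemma abs_gridCell_sub_le (hr : 0 < r) {k : ℤ} (h : |b p i - b q i| ≤ k * r) :
    |gridCell b r p i - gridCell b r q i| ≤ k := by
  have hle {p q : P} (h : b p i - b q i ≤ k * r) : gridCell b r p i ≤ gridCell b r q i + k := by
    rw [gridCell, gridCell, ← Int.floor_add_intCast]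
    refine Int.floor_mono ?_
    rwa [← sub_le_iff_le_add', ← _root_.sub_div, div_le_iff₀ hr]
  have hpq := hle (abs_le'.1 h).1
  have hqp := hle (p := q) (q := p) (by linarith [(abs_le'.1 h).2])
  exact abs_le'.2 ⟨by linarith, by linarith⟩

open Classical in
lemma card_image_gridCell_le_pow [Fintype ι] {U : Finset P} (hr : 0 < r)
    (hU : ∀ p ∈ U, ∀ i, |b p i| ≤ r) : (U.image (gridCell b r)).card ≤ 3 ^ Fintype.card ι := by
  have hsub : U.image (gridCell b r) ⊆ Fintype.piFinset fun _ => Finset.Icc (-1 : ℤ) 1 := by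
    simp only [Finset.image_subset_iff, Fintype.mem_piFinset, Finset.mem_Icc]
    intro p hp i
    have := abs_le.1 (hU p hp i)
    rw [gridCell, Int.le_floor, ← Int.lt_add_one_iff, Int.floor_lt, le_div_iff₀ hr,
      div_lt_iff₀ hr]
    constructor <;> push_cast <;> linarith
  simpa using Finset.card_le_card hsub

lemma subcell_ediv (x : ι → Fin L) (i : ι) : subcell L c x i / L = c i := by
  have hL : 0 < L := (x i).pos
  rw [subcell, add_comm, Int.add_mul_ediv_left _ _ (by exact_mod_cast hL.ne'),
    Int.ediv_eq_zero_of_lt (by positivity) (by exact_mod_cast (x i).2), zero_add]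

lemma exists_subcell_eq {a : ι → ℤ} (hL : 0 < L) (h : ∀ i, a i / L = c i) :
    ∃ x, subcell L c x = a := by
  have hL' : (0 : ℤ) < L := by exact_mod_cast hL
  refine ⟨fun i => ⟨(a i % L).toNat, ?_⟩, funext fun i => ?_⟩
  · have := Int.emod_lt_of_pos (a i) hL'
    omega
  · have hmod := Int.mul_ediv_add_emod (a i) L
    rw [h i] at hmod
    simpa only [subcell, Int.toNat_of_nonneg (Int.emod_nonneg (a i) hL'.ne')] using hmod

lemma subcell_injective : Function.Injective (subcell L c) := fun x y hxy => by
  funext i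
  simpa [subcell, Fin.ext_iff] using congrFun hxy i

lemma sum_le_sum_subcell [Fintype ι] [DecidableEq ι] (hL : 0 < L) {C : Finset (ι → ℤ)}
    (hC : ∀ a ∈ C, ∀ i, a i / L = c i) (f : (ι → ℤ) → ℝ≥0∞) :
    ∑ a ∈ C, f a ≤ ∑ x, f (subcell L c x) := by
  calc ∑ a ∈ C, f a ≤ ∑ a ∈ Finset.univ.map ⟨subcell L c, subcell_injective⟩, f a :=
        Finset.sum_le_sum_of_subset fun a ha => by simpa using exists_subcell_eq hL (hC a ha)
    _ = ∑ x, f (subcell L c x) := Finset.sum_map _ _ _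

lemma gridCell_mul_eq_of_eq_subcell {x : ι → Fin L} (h : gridCell b r p = subcell L c x) :
    gridCell b (L * r) p = c := by
  funext i
  rw [gridCell_natCast_mul, h, subcell_ediv]

lemma IsAxialTube.abs_gridCell_sub_le (hT : IsAxialTube b L j T) (hL : 0 < L) (hr : 1 ≤ r)
    (hp : p ∈ T) (hq : q ∈ T) (hpq : gridCell b (L * r) p = gridCell b (L * r) q) (hi : i ≠ j) :
    |gridCell b r p i - gridCell b r q i| ≤ 2 := by
  have hr0 : 0 < r := one_pos.trans_le hr
  have hL' : (0 : ℝ) < L := by exact_mod_cast hL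
  have hj : |b p j - b q j| / L ≤ r :=
    (div_le_iff₀' hL').2 (abs_sub_lt_of_gridCell_eq (by positivity) (congrFun hpq j)).le
  refine BKO.abs_gridCell_sub_le hr0 ((hT p hp q hq i hi).trans ?_)
  push_cast
  linarith

lemma IsAxialTube.exists_abs_subcell_sub_le (hT : IsAxialTube b L j T) (hL : 0 < L) (hr : 1 ≤ r)
    (c : ι → ℤ) :
    ∃ z : ι → ℤ, ∀ x : ι → Fin L, (∃ p ∈ T, gridCell b r p = subcell L c x) →
      ∀ i ≠ j, |subcell L c x i - z i| ≤ 2 := by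
  by_cases h : ∃ q ∈ T, gridCell b (L * r) q = c
  · obtain ⟨q, hq, hqc⟩ := h
    refine ⟨gridCell b r q, ?_⟩
    rintro x ⟨p, hp, hpx⟩ i hi
    rw [← hpx]
    exact hT.abs_gridCell_sub_le hL hr hp hq
      ((gridCell_mul_eq_of_eq_subcell hpx).trans hqc.symm) hi
  · refine ⟨0, ?_⟩
    rintro x ⟨p, hp, hpx⟩
    exact absurd ⟨p, hp, gridCell_mul_eq_of_eq_subcell hpx⟩ h

lemma card_abs_add_sub_le_two (u z : ℤ) :
    (Finset.univ.filter fun y : Fin L => |u + y - z| ≤ 2).card ≤ 5 := by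
  calc _ ≤ (Finset.Icc (z - u - 2) (z - u + 2)).card := by
        refine Finset.card_le_card_of_injOn (fun y => (y : ℤ)) (fun y hy => ?_)
          fun a _ b _ hab => by simpa [Fin.ext_iff] using hab
        have := abs_le.1 (Finset.mem_filter.1 hy).2
        simp only [Finset.coe_Icc, Set.mem_Icc]
        constructor <;> linarith
    _ = 5 := by rw [Int.card_Icc]; omega

lemma card_subcell_near_line_le [Fintype ι] [DecidableEq ι] (j : ι) (z : ι → ℤ) :
    (Finset.univ.filter fun x : ι → Fin L => ∀ i ≠ j, |subcell L c x i - z i| ≤ 2).card ≤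
      L * 5 ^ Fintype.card ι := by
  let A (i : ι) : Finset (Fin L) :=
    if i = j then Finset.univ else Finset.univ.filter fun y => |L * c i + (y : ℤ) - z i| ≤ 2
  have hA (i : ι) (hi : i ∈ Finset.univ.erase j) : (A i).card ≤ 5 := by
    simpa only [A, if_neg (Finset.ne_of_mem_erase hi)] using card_abs_add_sub_le_two _ _
  calc _ ≤ (Fintype.piFinset A).card := by
        refine Finset.card_le_card fun x hx => Fintype.mem_piFinset.2 fun i => ?_
        by_cases hi : i = j
        · simp [A, hi]
        · simpa [A, hi, subcell] using (Finset.mem_filter.1 hx).2 i hi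
    _ = (A j).card * ∏ i ∈ Finset.univ.erase j, (A i).card := by
        rw [Fintype.card_piFinset,
          ← Finset.mul_prod_erase _ (fun i => (A i).card) (Finset.mem_univ j)]
    _ ≤ L * 5 ^ (Finset.univ.erase j).card := by
        gcongr
        · simp [A]
        · exact Finset.prod_le_pow_card _ _ _ hA
    _ ≤ L * 5 ^ Fintype.card ι := by
        gcongr
        · norm_num
        · exact Finset.card_le_univ _

end Grid

section Kakeya

variable {ι P : Type*} [Fintype ι]

/-- The loss in one change of scale in the multilinear Kakeya inequality in `ℝⁿ`. -/
def kakeyaConst (n : ℕ) : ℝ≥0 := (n * 5 ^ n) ^ ((n : ℝ) / (n - 1))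

/-- The quantity which is almost monotone in the scale `r` in the proof of the multilinear Kakeya
inequality: a discrete form of `∫ ∏ j, (∑ T ∈ 𝒯 j, 1_T) ^ (1 / (n - 1))` over the union of the
cells of side `r` meeting `U`. -/
def jointSum (b : P → ι → ℝ) (r : ℝ) (𝒯 : ι → Finset (Finset P)) (U : Finset P) : ℝ≥0∞ :=
  open Classical in ∑ c ∈ U.image (gridCell b r),
    ∏ j, ((hits b r (𝒯 j) c).card : ℝ≥0∞) ^ (1 / ((Fintype.card ι : ℝ) - 1))

variable {b : P → ι → ℝ} {r : ℝ} {L : ℕ} {𝒯 : ι → Finset (Finset P)} {U : Finset P}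

lemma one_div_card_sub_one_pos (hι : 1 < Fintype.card ι) : 0 < 1 / ((Fintype.card ι : ℝ) - 1) :=
  one_div_pos.2 (sub_pos.2 (Nat.one_lt_cast.2 hι))

lemma prod_mul_rpow_eq_kakeyaConst_mul (hι : 1 < Fintype.card ι) (h : ι → ℝ≥0∞) :
    (Fintype.card ι : ℝ≥0∞) ^ ((Fintype.card ι : ℝ) / (Fintype.card ι - 1)) *
        ∏ j, (5 ^ Fintype.card ι * h j) ^ (1 / ((Fintype.card ι : ℝ) - 1)) =
      kakeyaConst (Fintype.card ι) * ∏ j, h j ^ (1 / ((Fintype.card ι : ℝ) - 1)) := by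
  have hq := (one_div_card_sub_one_pos hι).le
  have hp : 0 ≤ (Fintype.card ι : ℝ) / (Fintype.card ι - 1) :=
    div_nonneg (Nat.cast_nonneg _) (sub_nonneg.2 (by exact_mod_cast hι.le))
  have hexp : 1 / ((Fintype.card ι : ℝ) - 1) * Fintype.card ι =
      Fintype.card ι / (Fintype.card ι - 1) := by ring
  simp_rw [kakeyaConst, ENNReal.mul_rpow_of_nonneg _ _ hq, Finset.prod_mul_distrib,
    Finset.prod_const, Finset.card_univ, ← ENNReal.rpow_mul_natCast, hexp,
    ENNReal.coe_rpow_of_nonneg _ hp]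
  push_cast
  rw [ENNReal.mul_rpow_of_nonneg _ _ hp, mul_assoc]

open Classical in
/-- Inside one cell of side `L * r` the tubes look axis-parallel at scale `r`, so the number of
tubes in direction `j` meeting a subcell is essentially a function of the other coordinates. -/
lemma sum_prod_hits_subcell_le (hι : 1 < Fintype.card ι) (hL : 0 < L) (hr : 1 ≤ r)
    (h𝒯 : ∀ j, ∀ T ∈ 𝒯 j, IsAxialTube b L j T) (c : ι → ℤ) :
    ∑ x, ∏ j, ((hits b r (𝒯 j) (subcell L c x)).card : ℝ≥0∞) ^
        (1 / ((Fintype.card ι : ℝ) - 1)) ≤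
      kakeyaConst (Fintype.card ι) *
        ∏ j, ((hits b (L * r) (𝒯 j) c).card : ℝ≥0∞) ^ (1 / ((Fintype.card ι : ℝ) - 1)) := by
  have hq := (one_div_card_sub_one_pos hι).le
  have hcenter (j : ι) (T : Finset P) (hT : T ∈ 𝒯 j) :=
    (h𝒯 j T hT).exists_abs_subcell_sub_le hL hr c
  choose! z hz using hcenter
  let near (j : ι) (x : ι → Fin L) (T : Finset P) : Prop :=
    ∀ i ≠ j, |subcell L c x i - z j T i| ≤ 2
  let g (j : ι) (x : ι → Fin L) : ℕ := {T ∈ hits b (L * r) (𝒯 j) c | near j x T}.card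
  have hits_le (j : ι) (x : ι → Fin L) : (hits b r (𝒯 j) (subcell L c x)).card ≤ g j x := by
    refine Finset.card_le_card fun T hT => ?_
    obtain ⟨hT, p, hp, hpx⟩ := mem_hits.1 hT
    exact Finset.mem_filter.2
      ⟨mem_hits.2 ⟨hT, p, hp, gridCell_mul_eq_of_eq_subcell hpx⟩, hz j T hT x ⟨p, hp, hpx⟩⟩
  have g_update (j : ι) (x : ι → Fin L) (t : Fin L) : g j (Function.update x j t) = g j x :=
    congrArg Finset.card (Finset.filter_congr fun T _ => by simp +contextual [near, subcell])
  have sum_g_le (j : ι) :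
      ∑ x, g j x ≤ L * (5 ^ Fintype.card ι * (hits b (L * r) (𝒯 j) c).card) :=
    calc ∑ x, g j x = ∑ T ∈ hits b (L * r) (𝒯 j) c, (Finset.univ.filter (near j · T)).card :=
          Finset.sum_card_bipartiteAbove_eq_sum_card_bipartiteBelow (near j)
      _ ≤ (hits b (L * r) (𝒯 j) c).card • (L * 5 ^ Fintype.card ι) :=
          Finset.sum_le_card_nsmul _ _ _ fun T _ => card_subcell_near_line_le j (z j T)
      _ = _ := by rw [smul_eq_mul]; ring
  calc ∑ x, ∏ j, ((hits b r (𝒯 j) (subcell L c x)).card : ℝ≥0∞) ^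
          (1 / ((Fintype.card ι : ℝ) - 1))
      ≤ ∑ x, ∏ j, (g j x : ℝ≥0∞) ^ (1 / ((Fintype.card ι : ℝ) - 1)) := by
        gcongr with x _ j _
        exact hits_le j x
    _ ≤ _ := loomis_whitney_rpow_le hι (fun j x t => by rw [g_update])
        (G := fun j => 5 ^ Fintype.card ι * (hits b (L * r) (𝒯 j) c).card)
        (fun j => by finiteness)
        fun j => by simpa using (Nat.cast_le (α := ℝ≥0∞)).2 (sum_g_le j)
    _ = _ := prod_mul_rpow_eq_kakeyaConst_mul hι _

lemma jointSum_le_kakeyaConst_mul (hι : 1 < Fintype.card ι) (hL : 0 < L) (hr : 1 ≤ r)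
    (h𝒯 : ∀ j, ∀ T ∈ 𝒯 j, IsAxialTube b L j T) (U : Finset P) :
    jointSum b r 𝒯 U ≤ kakeyaConst (Fintype.card ι) * jointSum b (L * r) 𝒯 U := by
  classical
  have hmaps : ∀ c ∈ U.image (gridCell b r),
      (fun i => c i / (L : ℤ)) ∈ U.image (gridCell b (L * r)) := fun c hc => by
    obtain ⟨p, hp, rfl⟩ := Finset.mem_image.1 hc
    exact Finset.mem_image.2 ⟨p, hp, funext (gridCell_natCast_mul b r L p)⟩
  rw [jointSum, jointSum, ← Finset.sum_fiberwise_of_maps_to hmaps, Finset.mul_sum]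
  refine Finset.sum_le_sum fun c _ => ?_
  refine (sum_le_sum_subcell hL (fun a ha i => ?_) _).trans
    (sum_prod_hits_subcell_le hι hL hr h𝒯 c)
  exact congrFun (Finset.mem_filter.1 ha).2 i

lemma jointSum_one_le_pow_mul (hι : 1 < Fintype.card ι) (hL : 0 < L)
    (h𝒯 : ∀ j, ∀ T ∈ 𝒯 j, IsAxialTube b L j T) (U : Finset P) (M : ℕ) :
    jointSum b 1 𝒯 U ≤ kakeyaConst (Fintype.card ι) ^ M * jointSum b (L ^ M) 𝒯 U := by
  induction M with
  | zero => simp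
  | succ M ih =>
    have hL1 : (1 : ℝ) ≤ L ^ M := one_le_pow₀ (by exact_mod_cast hL)
    calc jointSum b 1 𝒯 U ≤ kakeyaConst (Fintype.card ι) ^ M * jointSum b (L ^ M) 𝒯 U := ih
      _ ≤ kakeyaConst (Fintype.card ι) ^ M *
            (kakeyaConst (Fintype.card ι) * jointSum b (L * L ^ M) 𝒯 U) := by
          gcongr
          exact jointSum_le_kakeyaConst_mul hι hL hL1 h𝒯 U
      _ = _ := by rw [pow_succ, pow_succ', mul_assoc]

open Classical in
lemma card_image_gridCell_le_jointSum (hι : 1 < Fintype.card ι)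
    (hU : ∀ p ∈ U, ∀ j, ∃ T ∈ 𝒯 j, p ∈ T) :
    ((U.image (gridCell b r)).card : ℝ≥0∞) ≤ jointSum b r 𝒯 U := by
  rw [Finset.cast_card]
  refine Finset.sum_le_sum fun c hc => Finset.one_le_prod' fun j _ => ?_
  refine ENNReal.one_le_rpow ?_ (one_div_card_sub_one_pos hι)
  obtain ⟨p, hp, rfl⟩ := Finset.mem_image.1 hc
  obtain ⟨T, hT, hpT⟩ := hU p hp j
  exact Nat.one_le_cast.2 (Finset.card_pos.2 ⟨T, mem_hits.2 ⟨hT, p, hpT, rfl⟩⟩)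

lemma jointSum_le_of_abs_le (hι : 1 < Fintype.card ι) (hr : 0 < r)
    (hU : ∀ p ∈ U, ∀ i, |b p i| ≤ r) :
    jointSum b r 𝒯 U ≤ 3 ^ Fintype.card ι *
      ∏ j, ((𝒯 j).card : ℝ≥0∞) ^ (1 / ((Fintype.card ι : ℝ) - 1)) := by
  classical
  have hq := (one_div_card_sub_one_pos hι).le
  calc jointSum b r 𝒯 U
      ≤ ∑ _c ∈ U.image (gridCell b r),
          ∏ j, ((𝒯 j).card : ℝ≥0∞) ^ (1 / ((Fintype.card ι : ℝ) - 1)) := by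
        unfold jointSum
        gcongr
        exact hits_subset _ _ _ _
    _ = ((U.image (gridCell b r)).card : ℝ≥0∞) *
          ∏ j, ((𝒯 j).card : ℝ≥0∞) ^ (1 / ((Fintype.card ι : ℝ) - 1)) := by
        rw [Finset.sum_const, nsmul_eq_mul]
    _ ≤ _ := by
        gcongr
        exact_mod_cast card_image_gridCell_le_pow hr hU

open Classical in
/-- The multilinear Kakeya inequality, in a discrete form which loses a factor per scale. -/
theorem card_image_gridCell_le (hι : 1 < Fintype.card ι) (hL : 0 < L)
    (h𝒯 : ∀ j, ∀ T ∈ 𝒯 j, IsAxialTube b L j T) (hU : ∀ p ∈ U, ∀ j, ∃ T ∈ 𝒯 j, p ∈ T) {M : ℕ}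
    (hM : ∀ p ∈ U, ∀ i, |b p i| ≤ (L : ℝ) ^ M) :
    ((U.image (gridCell b 1)).card : ℝ) ≤ kakeyaConst (Fintype.card ι) ^ M *
      (3 ^ Fintype.card ι * ∏ j, ((𝒯 j).card : ℝ) ^ (1 / ((Fintype.card ι : ℝ) - 1))) := by
  have hq := (one_div_card_sub_one_pos hι).le
  have hLM : (0 : ℝ) < (L : ℝ) ^ M := pow_pos (by exact_mod_cast hL) M
  have hkakeya := calc
    ((U.image (gridCell b 1)).card : ℝ≥0∞)
      ≤ jointSum b 1 𝒯 U := card_image_gridCell_le_jointSum hι hU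
    _ ≤ kakeyaConst (Fintype.card ι) ^ M * jointSum b (L ^ M) 𝒯 U :=
        jointSum_one_le_pow_mul hι hL h𝒯 U M
    _ ≤ kakeyaConst (Fintype.card ι) ^ M * (3 ^ Fintype.card ι *
          ∏ j, ((𝒯 j).card : ℝ≥0∞) ^ (1 / ((Fintype.card ι : ℝ) - 1))) := by
        gcongr
        exact jointSum_le_of_abs_le hι hLM hM
  simp_rw [← ENNReal.coe_natCast, ← ENNReal.coe_rpow_of_nonneg _ hq] at hkakeya
  generalize 1 / ((Fintype.card ι : ℝ) - 1) = e at hkakeya ⊢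
  norm_cast at hkakeya
  simpa only [NNReal.coe_mul, NNReal.coe_pow, NNReal.coe_prod, NNReal.coe_rpow, NNReal.coe_natCast,
    NNReal.coe_ofNat, Nat.cast_pow, Nat.cast_ofNat] using NNReal.coe_le_coe.2 hkakeya

end Kakeya

/-! ### Joints of transversal families of tubes -/

section QuantitativeIndependence

/-- Linear independence of `v` with a bound on the coefficients: the coordinates of a vector in the
span of `v` are at most `K` times its norm. -/
def QuantIndep {ι F : Type*} [Fintype ι] [NormedAddCommGroup F] [NormedSpace ℝ F] (K : ℝ)
    (v : ι → F) : Prop :=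
  ∀ (c : ι → ℝ) (i : ι), |c i| ≤ K * ‖∑ i, c i • v i‖

section NormedSpace

variable {ι F : Type*} [Fintype ι] [NormedAddCommGroup F] [NormedSpace ℝ F] {K : ℝ}

lemma QuantIndep.linearIndependent {v : ι → F} (hv : QuantIndep K v) : LinearIndependent ℝ v := by
  refine Fintype.linearIndependent_iff.2 fun c hc i => ?_
  simpa [hc] using hv c i

lemma QuantIndep.abs_repr_le {B : Module.Basis ι ℝ F} (hB : QuantIndep K B) (x : F) (i : ι) :
    |B.repr x i| ≤ K * ‖x‖ := by
  simpa only [B.sum_repr] using hB (B.repr x) i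

lemma QuantIndep.exists_basis [FiniteDimensional ℝ F] {v : ι → F} (hv : QuantIndep K v)
    (hcard : Fintype.card ι = Module.finrank ℝ F) : ∃ B : Module.Basis ι ℝ F, ⇑B = v :=
  ⟨Module.Basis.mk hv.linearIndependent
      (hv.linearIndependent.span_eq_top_of_card_eq_finrank' hcard).ge,
    Module.Basis.coe_mk _ _⟩

lemma norm_le_of_abs_repr_le {B : Module.Basis ι ℝ F} (hB : ∀ i, ‖B i‖ ≤ 1) {x : F} {R : ℝ}
    (hx : ∀ i, |B.repr x i| ≤ R) : ‖x‖ ≤ Fintype.card ι * R :=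
  calc ‖x‖ = ‖∑ i, B.repr x i • B i‖ := by rw [B.sum_repr]
    _ ≤ ∑ i, |B.repr x i| * ‖B i‖ := by
        simpa only [norm_smul, Real.norm_eq_abs] using
          norm_sum_le Finset.univ fun i => B.repr x i • B i
    _ ≤ ∑ _i : ι, R := Finset.sum_le_sum fun i _ =>
        (mul_le_of_le_one_right (abs_nonneg _) (hB i)).trans (hx i)
    _ = Fintype.card ι * R := by simp

lemma QuantIndep.abs_repr_le_div_add {B : Module.Basis ι ℝ F} (hB : QuantIndep K B)
    {ε C₀ L t : ℝ} (hK : 0 ≤ K) (hε : 0 ≤ ε) (hC₀ : 0 ≤ C₀) (hL : 1 ≤ L) (hεL : 2 * K * ε ≤ 1 / L)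
    {x : F} {i j : ι} (hij : i ≠ j) (hx : ‖x - t • B j‖ ≤ ε * |t| + C₀) :
    |B.repr x i| ≤ |B.repr x j| / L + 2 * K * C₀ := by
  have hy (k : ι) : |B.repr (x - t • B j) k| ≤ K * ε * |t| + K * C₀ :=
    calc _ ≤ K * (ε * |t| + C₀) := (hB.abs_repr_le _ k).trans (by gcongr)
      _ = _ := by ring
  have hi := hy i
  have hj := hy j
  simp only [map_sub, map_smul, Finsupp.sub_apply, Finsupp.smul_apply, B.repr_self,
    Finsupp.single_eq_same, Finsupp.single_eq_of_ne hij, smul_eq_mul, mul_one, mul_zero,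
    sub_zero] at hi hj
  have hKε : 2 * K * ε ≤ 1 := hεL.trans ((div_le_one (by linarith)).2 hL)
  have ht : |t| ≤ 2 * |B.repr x j| + 2 * (K * C₀) := by
    have := abs_sub_abs_le_abs_sub t (B.repr x j)
    rw [abs_sub_comm] at this
    nlinarith [abs_nonneg t]
  calc |B.repr x i| ≤ K * ε * |t| + K * C₀ := hi
    _ ≤ K * ε * (2 * |B.repr x j| + 2 * (K * C₀)) + K * C₀ := by gcongr
    _ = 2 * K * ε * |B.repr x j| + 2 * K * ε * (K * C₀) + K * C₀ := by ring
    _ ≤ 1 / L * |B.repr x j| + 1 * (K * C₀) + K * C₀ := by gcongr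
    _ = _ := by ring

end NormedSpace

variable {F : Type*} [NormedAddCommGroup F] [InnerProductSpace ℝ F]

/-- The vectors of `J` are all almost orthogonal to a common unit vector. -/
def NearHyperplane (τ : ℝ) (J : Set F) : Prop :=
  ∃ w : F, ‖w‖ = 1 ∧ ∀ v ∈ J, |⟪v, w⟫| ≤ τ

lemma exists_unit_orthogonal [FiniteDimensional ℝ F] {m : ℕ} (hm : m < Module.finrank ℝ F)
    (v : Fin m → F) : ∃ w : F, ‖w‖ = 1 ∧ ∀ i, ⟪v i, w⟫ = 0 := by
  have hne : (Submodule.span ℝ (range v))ᗮ ≠ ⊥ := by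
    rw [Ne, Submodule.orthogonal_eq_bot_iff]
    intro htop
    have := finrank_range_le_card (R := ℝ) v
    rw [Set.finrank, htop, finrank_top, Fintype.card_fin] at this
    omega
  obtain ⟨w, hw, hw0⟩ := Submodule.exists_mem_ne_zero_of_ne_bot hne
  refine ⟨‖w‖⁻¹ • w, norm_smul_inv_norm hw0, fun i => ?_⟩
  rw [inner_smul_right, (Submodule.mem_orthogonal _ _).1 hw (v i)
    (Submodule.subset_span (mem_range_self i)), mul_zero]

lemma QuantIndep.snoc {K τ : ℝ} {m : ℕ} {v : Fin m → F} (hv : QuantIndep K v) (hK : 1 ≤ K)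
    (hτ : 0 < τ) {u w : F} (hu : ‖u‖ ≤ 1) (hw : ‖w‖ = 1) (hvw : ∀ i, ⟪v i, w⟫ = 0)
    (huw : τ < |⟪u, w⟫|) :
    QuantIndep (K * (1 + 1 / τ)) (Fin.snoc v u : Fin (m + 1) → F) := by
  intro c i
  rw [Fin.sum_univ_castSucc]
  simp only [Fin.snoc_castSucc, Fin.snoc_last]
  set x := ∑ i : Fin m, c i.castSucc • v i + c (Fin.last m) • u
  have : 0 < 1 / τ := one_div_pos.2 hτ
  have hinner : ⟪x, w⟫ = c (Fin.last m) * ⟪u, w⟫ := by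
    simp [x, inner_add_left, sum_inner, inner_smul_left, hvw]
  have hlast : |c (Fin.last m)| ≤ 1 / τ * ‖x‖ := by
    rw [one_div, ← div_eq_inv_mul, le_div_iff₀ hτ]
    calc |c (Fin.last m)| * τ ≤ |c (Fin.last m)| * |⟪u, w⟫| := by gcongr
      _ = |⟪x, w⟫| := by rw [hinner, abs_mul]
      _ ≤ ‖x‖ := by simpa [hw] using abs_real_inner_le_norm x w
  have hinit : ‖∑ i : Fin m, c i.castSucc • v i‖ ≤ (1 + 1 / τ) * ‖x‖ :=
    calc ‖∑ i : Fin m, c i.castSucc • v i‖ = ‖x - c (Fin.last m) • u‖ := by simp [x]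
      _ ≤ ‖x‖ + |c (Fin.last m)| * ‖u‖ := by
          simpa only [norm_smul, Real.norm_eq_abs] using norm_sub_le x (c (Fin.last m) • u)
      _ ≤ ‖x‖ + 1 / τ * ‖x‖ :=
          add_le_add_right ((mul_le_of_le_one_right (abs_nonneg _) hu).trans hlast) _
      _ = _ := by ring
  refine Fin.lastCases ?_ (fun i => ?_) i
  · calc |c (Fin.last m)| ≤ 1 * (1 / τ) * ‖x‖ := by rwa [one_mul]
      _ ≤ K * (1 + 1 / τ) * ‖x‖ := by
          gcongr
          exact (lt_one_add _).le
  · calc |c i.castSucc| ≤ K * ‖∑ i : Fin m, c i.castSucc • v i‖ := hv (fun i => c i.castSucc) i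
      _ ≤ K * ((1 + 1 / τ) * ‖x‖) := by gcongr
      _ = _ := by ring

variable [FiniteDimensional ℝ F] {τ : ℝ} {J : Set F}

lemma exists_quantIndep_of_not_nearHyperplane (hτ : 0 < τ) (hJ : ∀ v ∈ J, ‖v‖ ≤ 1)
    (htr : ¬NearHyperplane τ J) :
    ∀ m ≤ Module.finrank ℝ F, ∃ v : Fin m → F, (∀ i, v i ∈ J) ∧ QuantIndep ((1 + 1 / τ) ^ m) v := by
  intro m
  induction m with
  | zero => exact fun _ => ⟨Fin.elim0, fun i => i.elim0, fun _ i => i.elim0⟩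
  | succ m ih =>
    intro hm
    obtain ⟨v, hvJ, hv⟩ := ih (by omega)
    obtain ⟨w, hw, hvw⟩ := exists_unit_orthogonal (by omega) v
    unfold NearHyperplane at htr
    push Not at htr
    obtain ⟨u, hu, huw⟩ := htr w hw
    refine ⟨Fin.snoc v u, Fin.lastCases (by simpa using hu) (by simpa using hvJ), ?_⟩
    rw [pow_succ]
    exact hv.snoc (one_le_pow₀ (by simp [hτ.le])) hτ (hJ u hu) hw hvw huw

end QuantitativeIndependence

section Joints

variable {n : ℕ}

lemma norm_le_of_abs_apply_le {x : E n} {R : ℝ} (hx : ∀ i, |x i| ≤ R) : ‖x‖ ≤ n * R := by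
  simpa using norm_le_of_abs_repr_le (B := (EuclideanSpace.basisFun (Fin n) ℝ).toBasis)
    (by simp) (by simpa using hx)

/-- An integer point as a vector. -/
def latticeVec (p : Fin n → ℤ) : E n := WithLp.toLp 2 fun i => (p i : ℝ)

/-- A discrete curve with direction `ε`-close to `v`, up to an additive error `C₀`. -/
def IsTube (ε C₀ : ℝ) (v : E n) (T : Finset (Fin n → ℤ)) : Prop :=
  ∀ p ∈ T, ∀ q ∈ T, ‖(latticeVec p - latticeVec q) - ⟪latticeVec p - latticeVec q, v⟫ • v‖ ≤
    ε * |⟪latticeVec p - latticeVec q, v⟫| + C₀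

lemma IsTube.mono {ε C₀ : ℝ} {v : E n} {T T' : Finset (Fin n → ℤ)} (h : IsTube ε C₀ v T)
    (hT : T' ⊆ T) : IsTube ε C₀ v T' :=
  fun p hp q hq => h p (hT hp) q (hT hq)

lemma card_le_of_norm_latticeVec_sub_le {U : Finset (Fin n → ℤ)} {p : Fin n → ℤ} {R : ℝ}
    (hU : ∀ q ∈ U, ‖latticeVec q - latticeVec p‖ ≤ R) : U.card ≤ (2 * ⌈R⌉₊ + 1) ^ n := by
  have hsub : U ⊆ Fintype.piFinset fun i => Finset.Icc (p i - ⌈R⌉₊) (p i + ⌈R⌉₊) := fun q hq => by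
    refine Fintype.mem_piFinset.2 fun i => ?_
    have hreal : |(q i : ℝ) - p i| ≤ ⌈R⌉₊ :=
      (PiLp.norm_apply_le (latticeVec q - latticeVec p) i).trans
        ((hU q hq).trans (Nat.le_ceil _))
    have hint : |q i - p i| ≤ (⌈R⌉₊ : ℤ) := by exact_mod_cast hreal
    rw [abs_le] at hint
    rw [Finset.mem_Icc]
    constructor <;> linarith
  calc U.card ≤ ∏ i, (Finset.Icc (p i - ⌈R⌉₊) (p i + ⌈R⌉₊)).card := by
        simpa only [Fintype.card_piFinset] using Finset.card_le_card hsub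
    _ ≤ (2 * ⌈R⌉₊ + 1) ^ Fintype.card (Fin n) :=
        Finset.prod_le_pow_card _ _ _ fun i _ => by rw [Int.card_Icc]; omega
    _ = _ := by rw [Fintype.card_fin]

/-- The coordinates of an integer point with respect to `B`, in units of `ρ`. -/
def scaledRepr (B : Module.Basis (Fin n) ℝ (E n)) (ρ : ℝ) (p : Fin n → ℤ) (i : Fin n) : ℝ :=
  B.repr (latticeVec p) i / ρ

variable {B : Module.Basis (Fin n) ℝ (E n)} {K ε C₀ ρ : ℝ}

lemma abs_scaledRepr_sub (hρ : 0 < ρ) (p q : Fin n → ℤ) (i : Fin n) :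
    |scaledRepr B ρ p i - scaledRepr B ρ q i| = |B.repr (latticeVec p - latticeVec q) i| / ρ := by
  rw [scaledRepr, scaledRepr, ← _root_.sub_div, abs_div, abs_of_pos hρ, map_sub,
    Finsupp.sub_apply]

lemma IsTube.isAxialTube (hB : QuantIndep K B) {L : ℝ} {j : Fin n} {T : Finset (Fin n → ℤ)}
    (hT : IsTube ε C₀ (B j) T) (hK : 0 < K) (hε : 0 ≤ ε) (hC₀ : 0 < C₀) (hL : 1 ≤ L)
    (hεL : 2 * K * ε ≤ 1 / L) : IsAxialTube (scaledRepr B (2 * K * C₀)) L j T := by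
  intro p hp q hq i hij
  have hρ : 0 < 2 * K * C₀ := by positivity
  rw [abs_scaledRepr_sub hρ, abs_scaledRepr_sub hρ, div_le_iff₀ hρ]
  refine (hB.abs_repr_le_div_add hK.le hε hC₀.le hL hεL hij (hT p hp q hq)).trans_eq ?_
  field_simp

open Classical in
lemma card_le_mul_card_image_gridCell (hB : ∀ i, ‖B i‖ ≤ 1) (hρ : 0 < ρ)
    (U : Finset (Fin n → ℤ)) :
    U.card ≤ (2 * ⌈n * ρ⌉₊ + 1) ^ n * (U.image (gridCell (scaledRepr B ρ) 1)).card := by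
  refine Finset.card_le_mul_card_image U _ fun c hc => ?_
  obtain ⟨p, -, rfl⟩ := Finset.mem_image.1 hc
  refine card_le_of_norm_latticeVec_sub_le (p := p) fun q hq => ?_
  have hcell := (Finset.mem_filter.1 hq).2
  simpa using norm_le_of_abs_repr_le hB fun i => by
    have := abs_sub_lt_of_gridCell_eq one_pos (congrFun hcell i)
    rw [abs_scaledRepr_sub hρ, div_lt_one hρ] at this
    exact this.le

theorem card_joints_le (hn : 1 < n) (hBQ : QuantIndep K B) (hB : ∀ i, ‖B i‖ ≤ 1) (hK : 1 ≤ K)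
    (hC₀ : n ≤ C₀) (hε : 0 ≤ ε) {L : ℕ} (hL : 0 < L) (hεL : 2 * K * ε ≤ 1 / L)
    {𝒯 : Fin n → Finset (Finset (Fin n → ℤ))} (h𝒯 : ∀ j, ∀ T ∈ 𝒯 j, IsTube ε C₀ (B j) T)
    {U : Finset (Fin n → ℤ)} (hU : ∀ p ∈ U, ∀ j, ∃ T ∈ 𝒯 j, p ∈ T) {M : ℕ}
    (hM : ∀ p ∈ U, ∀ i, |(p i : ℝ)| ≤ (L : ℝ) ^ M) :
    (U.card : ℝ) ≤ (2 * ⌈n * (2 * K * C₀)⌉₊ + 1) ^ n *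
      (kakeyaConst n ^ M * (3 ^ n * ∏ j, ((𝒯 j).card : ℝ) ^ (1 / ((n : ℝ) - 1)))) := by
  classical
  have hC₀' : 0 < C₀ := (Nat.cast_pos.2 (zero_lt_one.trans hn)).trans_le hC₀
  have hρ : 0 < 2 * K * C₀ := by positivity
  have : (0 : ℝ) < (L : ℝ) ^ M := pow_pos (Nat.cast_pos.2 hL) M
  have hsize : ∀ p ∈ U, ∀ i, |scaledRepr B (2 * K * C₀) p i| ≤ (L : ℝ) ^ M := fun p hp i => by
    rw [scaledRepr, abs_div, abs_of_pos hρ, div_le_iff₀ hρ]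
    calc |B.repr (latticeVec p) i| ≤ K * ‖latticeVec p‖ := hBQ.abs_repr_le _ i
      _ ≤ K * (n * (L : ℝ) ^ M) := by
          gcongr
          exact norm_le_of_abs_apply_le (hM p hp)
      _ ≤ K * (C₀ * (L : ℝ) ^ M) := by gcongr
      _ ≤ 2 * (K * (C₀ * (L : ℝ) ^ M)) := le_mul_of_one_le_left (by positivity) one_le_two
      _ = (L : ℝ) ^ M * (2 * K * C₀) := by ring
  have hcells := card_image_gridCell_le (by rwa [Fintype.card_fin]) hL
    (fun j T hT => (h𝒯 j T hT).isAxialTube hBQ (by positivity) hε hC₀'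
      (Nat.one_le_cast.2 hL) hεL) hU hsize
  rw [Fintype.card_fin] at hcells
  calc (U.card : ℝ) ≤ (2 * ⌈n * (2 * K * C₀)⌉₊ + 1) ^ n *
          (U.image (gridCell (scaledRepr B (2 * K * C₀)) 1)).card := by
        exact_mod_cast card_le_mul_card_image_gridCell hB hρ U
    _ ≤ _ := by gcongr

end Joints

/-! ### Sparse splittings of sets of integer points -/

section SparseSplitting

/-- Greedy extraction: remove from `H` large members of the class `chain` until none is left. -/
lemma exists_rich_family {P : Type*} (chain : Finset P → Prop) {t : ℝ} (ht : 0 < t)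
    (H : Finset P) :
    ∃ 𝒯 : Finset (Finset P), (∀ T ∈ 𝒯, chain T) ∧ (𝒯.card : ℝ) * t ≤ H.card ∧
      ∀ T ⊆ H, chain T → (∀ p ∈ T, ∀ T' ∈ 𝒯, p ∉ T') → (T.card : ℝ) < t := by
  classical
  induction H using Finset.strongInduction with
  | H H ih =>
    by_cases hex : ∃ T ⊆ H, chain T ∧ t ≤ (T.card : ℝ)
    · obtain ⟨T, hTH, hT, hcard⟩ := hex
      have hTne : T.Nonempty := Finset.card_pos.1 (by exact_mod_cast ht.trans_le hcard)
      obtain ⟨𝒯, hchain, h𝒯card, hpoor⟩ := ih (H \ T) (Finset.sdiff_ssubset hTH hTne)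
      refine ⟨insert T 𝒯, by simpa using ⟨hT, hchain⟩, ?_, fun T' hT' hch hdis => ?_⟩
      · have hinsert : ((insert T 𝒯).card : ℝ) ≤ 𝒯.card + 1 := by
          exact_mod_cast Finset.card_insert_le T 𝒯
        have hsdiff : ((H \ T).card : ℝ) + T.card = H.card := by
          exact_mod_cast Finset.card_sdiff_add_card_eq_card hTH
        nlinarith
      · refine hpoor T' (fun p hp => ?_) hch fun p hp T'' hT'' =>
          hdis p hp T'' (Finset.mem_insert_of_mem hT'')
        exact Finset.mem_sdiff.2 ⟨hT' hp, hdis p hp T (Finset.mem_insert_self _ _)⟩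
    · push Not at hex
      exact ⟨∅, by simp, by simp, fun T hT hch _ => hex T hT hch⟩

lemma nearHyperplane_empty {F : Type*} [NormedAddCommGroup F] [InnerProductSpace ℝ F]
    [Nontrivial F] (τ : ℝ) : NearHyperplane τ (∅ : Set F) := by
  obtain ⟨w, hw⟩ := exists_norm_eq F zero_le_one
  exact ⟨w, hw, by simp⟩

variable {n : ℕ} {V : Finset (E n)} {τ ε C₀ : ℝ}

/-- An assignment `j` of directions near a hyperplane to integer points such that the points of `H`
in tubes in a direction that they are not assigned are few: at most `b` in each tube. -/
def IsSplitting (V : Finset (E n)) (τ ε C₀ : ℝ) (H : Finset (Fin n → ℤ)) (b : ℝ)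
    (j : (Fin n → ℤ) → Finset (E n)) : Prop :=
  (∀ p, j p ⊆ V ∧ NearHyperplane τ (j p : Set (E n))) ∧
    ∀ v ∈ V, ∀ T ⊆ H, (∀ p ∈ T, v ∉ j p) → IsTube ε C₀ v T → (T.card : ℝ) ≤ b

lemma IsSplitting.mono {H : Finset (Fin n → ℤ)} {b b' : ℝ} {j : (Fin n → ℤ) → Finset (E n)}
    (hj : IsSplitting V τ ε C₀ H b j) (hb : b ≤ b') : IsSplitting V τ ε C₀ H b' j :=
  ⟨hj.1, fun v hv T hT hvT hTube => (hj.2 v hv T hT hvT hTube).trans hb⟩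

lemma isSplitting_empty (hn : 1 ≤ n) (V : Finset (E n)) (τ ε C₀ : ℝ) (H : Finset (Fin n → ℤ)) :
    IsSplitting V τ ε C₀ H H.card fun _ => ∅ := by
  have : NeZero n := ⟨by omega⟩
  exact ⟨fun _ => ⟨by simp, by simpa using nearHyperplane_empty τ⟩,
    fun v _ T hT _ _ => by exact_mod_cast Finset.card_le_card hT⟩

open Classical in
/-- The directions of the tubes through `p`. -/
def dirsThrough (V : Finset (E n)) (𝒯 : E n → Finset (Finset (Fin n → ℤ))) (p : Fin n → ℤ) :
    Finset (E n) :=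
  V.filter fun v => ∃ T ∈ 𝒯 v, p ∈ T

lemma mem_dirsThrough {𝒯 : E n → Finset (Finset (Fin n → ℤ))} {p : Fin n → ℤ} {v : E n} :
    v ∈ dirsThrough V 𝒯 p ↔ v ∈ V ∧ ∃ T ∈ 𝒯 v, p ∈ T :=
  Finset.mem_filter

open Classical in
/-- If all tubes outside the families `𝒯 v` are poor, it remains to split the points where the
directions of the families are transversal. -/
lemma IsSplitting.glue {𝒯 : E n → Finset (Finset (Fin n → ℤ))} {H : Finset (Fin n → ℤ)}
    {t b : ℝ} {j : (Fin n → ℤ) → Finset (E n)}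
    (hpoor : ∀ v ∈ V, ∀ T ⊆ H, IsTube ε C₀ v T → (∀ p ∈ T, ∀ T' ∈ 𝒯 v, p ∉ T') →
      (T.card : ℝ) ≤ t)
    (hj : IsSplitting V τ ε C₀
      (H.filter fun p => ¬NearHyperplane τ (dirsThrough V 𝒯 p : Set (E n))) b j) :
    IsSplitting V τ ε C₀ H (t + b) fun p =>
      if NearHyperplane τ (dirsThrough V 𝒯 p : Set (E n)) then dirsThrough V 𝒯 p else j p := by
  refine ⟨fun p => ?_, fun v hv T hT hvT hTube => ?_⟩
  · beta_reduce
    split_ifs with hp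
    · exact ⟨fun v hv => (mem_dirsThrough.1 hv).1, hp⟩
    · exact hj.1 p
  have hnear : ((T.filter fun p => NearHyperplane τ (dirsThrough V 𝒯 p : Set (E n))).card : ℝ)
      ≤ t := by
    refine hpoor v hv _ ((Finset.filter_subset _ _).trans hT)
      (hTube.mono (Finset.filter_subset _ _)) fun p hp T' hT' hpT' => ?_
    obtain ⟨hpT, hpnear⟩ := Finset.mem_filter.1 hp
    have hvp := hvT p hpT
    simp only [if_pos hpnear] at hvp
    exact hvp (mem_dirsThrough.2 ⟨hv, T', hT', hpT'⟩)
  have hfar : ((T.filter fun p => ¬NearHyperplane τ (dirsThrough V 𝒯 p : Set (E n))).card : ℝ)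
      ≤ b := by
    refine hj.2 v hv _ (Finset.filter_subset_filter _ hT) (fun p hp => ?_)
      (hTube.mono (Finset.filter_subset _ _))
    obtain ⟨hpT, hpfar⟩ := Finset.mem_filter.1 hp
    simpa only [if_neg hpfar] using hvT p hpT
  calc (T.card : ℝ) = _ := by
        exact_mod_cast (Finset.card_filter_add_card_filter_not (s := T)
          fun p => NearHyperplane τ (dirsThrough V 𝒯 p : Set (E n))).symm
    _ ≤ t + b := add_le_add hnear hfar

theorem card_le_of_not_nearHyperplane (hn : 1 < n) (hV : ∀ v ∈ V, ‖v‖ ≤ 1) (hτ : 0 < τ)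
    (hC₀ : n ≤ C₀) (hε : 0 ≤ ε) {L : ℕ} (hL : 0 < L) (hεL : 2 * (1 + 1 / τ) ^ n * ε ≤ 1 / L)
    {𝒯 : E n → Finset (Finset (Fin n → ℤ))} (h𝒯 : ∀ v, ∀ T ∈ 𝒯 v, IsTube ε C₀ v T) {R : ℝ}
    (hR : ∀ v, ((𝒯 v).card : ℝ) ≤ R) {U : Finset (Fin n → ℤ)}
    (hU : ∀ p ∈ U, ¬NearHyperplane τ (dirsThrough V 𝒯 p : Set (E n))) {M : ℕ}
    (hM : ∀ p ∈ U, ∀ i, |(p i : ℝ)| ≤ (L : ℝ) ^ M) :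
    (U.card : ℝ) ≤ V.card ^ n * ((2 * ⌈n * (2 * (1 + 1 / τ) ^ n * C₀)⌉₊ + 1) ^ n *
      (kakeyaConst n ^ M * (3 ^ n * R ^ ((n : ℝ) / (n - 1))))) := by
  classical
  set Q : ℝ := (1 + 1 / τ) ^ n
  have hQ : 1 ≤ Q := one_le_pow₀ (by simp [hτ.le])
  let 𝒱 := (Fintype.piFinset fun _ : Fin n => V).filter fun v => QuantIndep Q v
  let joints (v : Fin n → E n) := U.filter fun p => ∀ i, v i ∈ dirsThrough V 𝒯 p
  have hcover : U ⊆ 𝒱.biUnion joints := fun p hp => by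
    obtain ⟨v, hvp, hv⟩ := exists_quantIndep_of_not_nearHyperplane hτ
      (fun v hv => hV v (mem_dirsThrough.1 hv).1) (hU p hp) n finrank_euclideanSpace_fin.ge
    exact Finset.mem_biUnion.2 ⟨v, Finset.mem_filter.2 ⟨Fintype.mem_piFinset.2 fun i =>
      (mem_dirsThrough.1 (hvp i)).1, hv⟩, Finset.mem_filter.2 ⟨hp, hvp⟩⟩
  have hR0 : 0 ≤ R := (Nat.cast_nonneg _).trans (hR 0)
  have hprod (v : Fin n → E n) :
      ∏ i, ((𝒯 (v i)).card : ℝ) ^ (1 / ((n : ℝ) - 1)) ≤ R ^ ((n : ℝ) / (n - 1)) := by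
    have : 0 ≤ 1 / ((n : ℝ) - 1) := one_div_nonneg.2 (sub_pos.2 (Nat.one_lt_cast.2 hn)).le
    calc _ ≤ ∏ _i : Fin n, R ^ (1 / ((n : ℝ) - 1)) := by
          gcongr with i
          exact hR _
      _ = _ := by
          rw [Finset.prod_const, Finset.card_univ, Fintype.card_fin, ← Real.rpow_mul_natCast hR0,
            one_div_mul_eq_div]
  have hjoints : ∀ v ∈ 𝒱, ((joints v).card : ℝ) ≤ (2 * ⌈n * (2 * Q * C₀)⌉₊ + 1) ^ n *
      (kakeyaConst n ^ M * (3 ^ n * R ^ ((n : ℝ) / (n - 1)))) := fun v hv => by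
    obtain ⟨hvV, hvQ⟩ := Finset.mem_filter.1 hv
    obtain ⟨B, rfl⟩ := hvQ.exists_basis (by simp)
    refine (card_joints_le (U := joints B) hn hvQ
      (fun i => hV _ (Fintype.mem_piFinset.1 hvV i)) hQ hC₀ hε hL hεL (fun i => h𝒯 (B i))
      (fun p hp i => (mem_dirsThrough.1 ((Finset.mem_filter.1 hp).2 i)).2)
      fun p hp => hM p (Finset.mem_filter.1 hp).1).trans ?_
    gcongr
    exact hprod B
  calc (U.card : ℝ) ≤ ∑ v ∈ 𝒱, ((joints v).card : ℝ) := by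
        exact_mod_cast (Finset.card_le_card hcover).trans Finset.card_biUnion_le
    _ ≤ 𝒱.card * _ := (Finset.sum_le_card_nsmul _ _ _ hjoints).trans_eq (nsmul_eq_mul _ _)
    _ ≤ _ := by
        gcongr
        exact_mod_cast (Finset.card_filter_le _ _).trans_eq (Fintype.card_piFinset_const V n)

/-- Sets of `O(2^{ks})` integer points of size `O(2^k)` have splittings which leave only
`O(2^{k(1-κ)})` points in each tube. -/
def SparseSplitting (V : Finset (E n)) (τ ε C₀ s : ℝ) : Prop :=
  ∀ K B : ℝ, 0 ≤ K → ∃ C κ : ℝ, 0 ≤ C ∧ 0 < κ ∧ ∀ (k : ℕ) (H : Finset (Fin n → ℤ)),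
    (∀ p ∈ H, ∀ i, |(p i : ℝ)| ≤ B * 2 ^ k) → (H.card : ℝ) ≤ K * 2 ^ (k * s) →
    ∃ j, IsSplitting V τ ε C₀ H (C * 2 ^ (k * (1 - κ))) j

lemma sparseSplitting_of_lt_one (hn : 1 ≤ n) {s : ℝ} (hs : s < 1) :
    SparseSplitting V τ ε C₀ s := fun K B hK =>
  ⟨K, 1 - s, hK, by linarith, fun k H _ hcard =>
    ⟨_, (isSplitting_empty hn V τ ε C₀ H).mono (by simpa using hcard)⟩⟩

lemma two_rpow_natCast_mul_le {k : ℕ} {x y : ℝ} (h : x ≤ y) :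
    (2 : ℝ) ^ (k * x) ≤ 2 ^ (k * y) :=
  Real.rpow_le_rpow_of_exponent_le one_le_two (by gcongr)

/-- The inequality of exponents which makes the induction on `s` work for `s < n`. -/
lemma add_mul_div_sub_one_le_sub {d s c : ℝ} (hd : 1 < d) (hc : 0 ≤ c) (hcs : 8 * d * c ≤ d - s) :
    c + (s - 1 + 4 * c) * (d / (d - 1)) ≤ s - c := by
  rw [← mul_div_assoc, ← le_sub_iff_add_le', div_le_iff₀ (sub_pos.2 hd)]
  nlinarith

lemma two_rpow_mul_mul_rpow_le {d s c K : ℝ} (hd : 1 < d) (hc : 0 ≤ c)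
    (hcs : 8 * d * c ≤ d - s) (hK : 0 ≤ K) (k : ℕ) :
    2 ^ (k * c) * (K * 2 ^ (k * (s - 1 + 4 * c))) ^ (d / (d - 1)) ≤
      K ^ (d / (d - 1)) * 2 ^ (k * (s - c)) :=
  calc _ = K ^ (d / (d - 1)) * 2 ^ (k * (c + (s - 1 + 4 * c) * (d / (d - 1)))) := by
        rw [mul_add (k : ℝ) c, Real.rpow_add two_pos, Real.mul_rpow hK (by positivity),
          ← Real.rpow_mul two_pos.le, mul_assoc (k : ℝ)]
        ring
    _ ≤ _ := by
        gcongr ?_ * ?_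
        exact two_rpow_natCast_mul_le (add_mul_div_sub_one_le_sub hd hc hcs)

lemma exists_pow_scale {A B e : ℝ} {a : ℕ} (ha : 1 ≤ a) (hA₀ : 0 ≤ A) (he : 0 ≤ e)
    (hA : A ≤ 2 ^ (a * e)) :
    ∃ C, 0 ≤ C ∧ ∀ k : ℕ, ∃ M : ℕ, B * 2 ^ k ≤ ((2 ^ a : ℕ) : ℝ) ^ M ∧ A ^ M ≤ C * 2 ^ (k * e) := by
  obtain ⟨b, hb⟩ := pow_unbounded_of_one_lt B one_lt_two
  refine ⟨2 ^ (e * (a * (1 + b))), by positivity, fun k => ⟨k / a + 1 + b, ?_, ?_⟩⟩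
  · have hle : b + k ≤ a * (k / a + 1 + b) := by
      have := Nat.lt_mul_div_succ k ha
      nlinarith
    calc B * 2 ^ k ≤ 2 ^ b * 2 ^ k := by gcongr
      _ = 2 ^ (b + k) := (pow_add _ _ _).symm
      _ ≤ 2 ^ (a * (k / a + 1 + b)) := pow_le_pow_right₀ one_le_two hle
      _ = _ := by rw [pow_mul, Nat.cast_pow, Nat.cast_ofNat]
  · have hle : a * (k / a + 1 + b) ≤ k + a * (1 + b) := by
      have := Nat.mul_div_le k a
      nlinarith
    have hle' : (a : ℝ) * (k / a + 1 + b : ℕ) ≤ k + a * (1 + b) := by exact_mod_cast hle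
    calc A ^ (k / a + 1 + b) ≤ ((2 : ℝ) ^ (a * e)) ^ (k / a + 1 + b) := by gcongr
      _ = 2 ^ (e * (a * (k / a + 1 + b : ℕ))) := by
          rw [← Real.rpow_mul_natCast two_pos.le]
          ring_nf
      _ ≤ 2 ^ (e * (k + a * (1 + b))) :=
          Real.rpow_le_rpow_of_exponent_le one_le_two (by gcongr)
      _ = _ := by
          rw [← Real.rpow_add two_pos]
          ring_nf

/-- Put the directions of the rich tubes at the points where these are near a hyperplane: by the
bound on joints, the remaining set of points has a smaller exponent. -/
lemma SparseSplitting.of_sub (hn : 1 < n) (hV : ∀ v ∈ V, ‖v‖ ≤ 1) {s c : ℝ} (hτ : 0 < τ)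
    (hC₀ : n ≤ C₀) (hε : 0 ≤ ε) {a : ℕ} (ha : 1 ≤ a)
    (hεa : 2 * (1 + 1 / τ) ^ n * ε ≤ 1 / (2 ^ a : ℕ)) (hc : 0 < c) (hcs : 8 * n * c ≤ n - s)
    (hA : kakeyaConst n ≤ (2 : ℝ) ^ (a * c)) (ih : SparseSplitting V τ ε C₀ (s - c)) :
    SparseSplitting V τ ε C₀ s := by
  classical
  intro K B hK
  obtain ⟨A, hA₀, hscale⟩ := exists_pow_scale (B := B) ha NNReal.zero_le_coe hc.le hA
  set r : ℝ := n / (n - 1)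
  set D : ℝ := (2 * ⌈n * (2 * (1 + 1 / τ) ^ n * C₀)⌉₊ + 1) ^ n
  set K' : ℝ := V.card ^ n * (D * (A * (3 ^ n * K ^ r)))
  obtain ⟨C, κ, hC, hκ, hsplit⟩ := ih K' B (by positivity)
  refine ⟨1 + C, min (4 * c) κ, by positivity, by positivity, fun k H hH hcard => ?_⟩
  have ht : (0 : ℝ) < 2 ^ (k * (1 - 4 * c)) := by positivity
  choose 𝒯 h𝒯 h𝒯card hpoor using fun v => exists_rich_family (IsTube ε C₀ v) ht H
  have hR (v : E n) : ((𝒯 v).card : ℝ) ≤ K * 2 ^ (k * (s - 1 + 4 * c)) := by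
    calc ((𝒯 v).card : ℝ) ≤ K * 2 ^ (k * s) / 2 ^ (k * (1 - 4 * c)) :=
          (le_div_iff₀ ht).2 ((h𝒯card v).trans hcard)
      _ = _ := by
          rw [mul_div_assoc, ← Real.rpow_sub two_pos]
          ring_nf
  obtain ⟨M, hM, hAM⟩ := hscale k
  set U := H.filter fun p => ¬NearHyperplane τ (dirsThrough V 𝒯 p : Set (E n))
  have hUH : U ⊆ H := Finset.filter_subset _ _
  have hU : (U.card : ℝ) ≤ K' * 2 ^ (k * (s - c)) := by
    calc (U.card : ℝ) ≤ V.card ^ n * (D * (kakeyaConst n ^ M *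
          (3 ^ n * (K * 2 ^ (k * (s - 1 + 4 * c))) ^ r))) :=
          card_le_of_not_nearHyperplane hn hV hτ hC₀ hε (by positivity) hεa h𝒯 hR
            (fun p hp => (Finset.mem_filter.1 hp).2) fun p hp i => (hH p (hUH hp) i).trans hM
      _ ≤ V.card ^ n * (D * (A * 2 ^ (k * c) *
          (3 ^ n * (K * 2 ^ (k * (s - 1 + 4 * c))) ^ r))) := by gcongr
      _ = V.card ^ n * (D * (A * (3 ^ n *
          (2 ^ (k * c) * (K * 2 ^ (k * (s - 1 + 4 * c))) ^ r)))) := by ring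
      _ ≤ V.card ^ n * (D * (A * (3 ^ n *
          (K ^ r * 2 ^ (k * (s - c)))))) := by
          gcongr ?_ * (?_ * (?_ * (?_ * ?_)))
          exact two_rpow_mul_mul_rpow_le (Nat.one_lt_cast.2 hn) hc.le hcs hK k
      _ = K' * 2 ^ (k * (s - c)) := by ring
  obtain ⟨j, hj⟩ := hsplit k U (fun p hp => hH p (hUH hp)) hU
  refine ⟨_, (IsSplitting.glue (fun v _ T hT hTube hdis => (hpoor v T hT hTube hdis).le)
    hj).mono ?_⟩
  rw [add_mul, one_mul]
  gcongr ?_ + _ * ?_ <;> apply two_rpow_natCast_mul_le <;> gcongr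
  exacts [min_le_left _ _, min_le_right _ _]

lemma exists_le_two_rpow_natCast_mul (A : ℝ) {c : ℝ} (hc : 0 < c) :
    ∃ a : ℕ, 1 ≤ a ∧ A ≤ (2 : ℝ) ^ (a * c) := by
  have hlim : Tendsto (fun a : ℕ => (2 : ℝ) ^ (a * c)) atTop atTop :=
    (tendsto_rpow_atTop_of_base_gt_one 2 one_lt_two).comp
      (tendsto_natCast_atTop_atTop.atTop_mul_const hc)
  exact ((eventually_ge_atTop 1).and (hlim.eventually_ge_atTop A)).exists

theorem exists_sparseSplitting (hn : 1 ≤ n) {s : ℝ} (hτ : 0 < τ) (hs : s < n)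
    (hC₀ : n ≤ C₀) {ε₀ : ℝ} (hε₀ : 0 < ε₀) :
    ∃ ε, 0 < ε ∧ ε ≤ ε₀ ∧ ∀ V : Finset (E n), (∀ v ∈ V, ‖v‖ ≤ 1) →
      SparseSplitting V τ ε C₀ s := by
  rcases hn.eq_or_lt with rfl | hn'
  · exact ⟨ε₀, hε₀, le_rfl, fun V _ => sparseSplitting_of_lt_one le_rfl (by simpa using hs)⟩
  set c : ℝ := (n - s) / (8 * n)
  have hc : 0 < c := div_pos (sub_pos.2 hs) (by positivity)
  have hcn : 8 * n * c = n - s := mul_div_cancel₀ _ (by positivity)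
  obtain ⟨a, ha, hA⟩ := exists_le_two_rpow_natCast_mul (kakeyaConst n) hc
  have hQ : 0 < 2 * (1 + 1 / τ) ^ n := by positivity
  refine ⟨min ε₀ (1 / (2 ^ a : ℕ) / (2 * (1 + 1 / τ) ^ n)), lt_min hε₀ (by positivity),
    min_le_left _ _, fun V hV => ?_⟩
  have hind (i : ℕ) : ∀ s' ≤ s, s' < 1 + i * c →
      SparseSplitting V τ (min ε₀ (1 / (2 ^ a : ℕ) / (2 * (1 + 1 / τ) ^ n))) C₀ s' := by
    induction i with
    | zero => exact fun s' _ h => sparseSplitting_of_lt_one hn (by simpa using h)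
    | succ i ih =>
      intro s' hs' h
      refine .of_sub hn' hV hτ hC₀ (by positivity) ha ?_ hc (by linarith) hA
        (ih _ (by linarith) (by push_cast at h; linarith))
      rw [mul_comm, ← le_div_iff₀ hQ]
      exact min_le_right _ _
  obtain ⟨i, hi⟩ := exists_nat_gt ((s - 1) / c)
  rw [div_lt_iff₀ hc] at hi
  exact hind i s le_rfl (by linarith)

end SparseSplitting

/-! ### Dyadic cells and Hausdorff measure -/

section DyadicCells

lemma exists_cover_of_hausdorffMeasure_eq_zero {Y : Type*} [EMetricSpace Y] [MeasurableSpace Y]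
    [BorelSpace Y] {R : Set Y} {s : ℝ} (hs : 0 < s) (hR : μH[s] R = 0) {δ : ℝ≥0∞} (hδ : 0 < δ) :
    ∃ t : ℕ → Set Y, R ⊆ ⋃ m, t m ∧ (∀ m, ediam (t m) ≤ δ) ∧ ∑' m, ediam (t m) ^ s ≤ δ := by
  rw [Measure.hausdorffMeasure_apply, ENNReal.iSup_eq_zero] at hR
  have hδR := (ENNReal.iSup_eq_zero.1 (hR δ) hδ).trans_lt hδ
  simp only [iInf_lt_iff] at hδR
  obtain ⟨t, hRt, hdiam, hsum⟩ := hδR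
  refine ⟨t, hRt, hdiam, (ENNReal.tsum_le_tsum fun m => ?_).trans hsum.le⟩
  rcases (t m).eq_empty_or_nonempty with h | h <;> simp [h, hs]

lemma exists_dyadic_scale_of_ne_zero {D : ℝ≥0∞} {j : ℕ} (hD₀ : D ≠ 0) (hD : D ≤ 2⁻¹ ^ j) :
    ∃ k ≥ j, D ≤ 2⁻¹ ^ k ∧ 2⁻¹ ^ k ≤ 2 * D := by
  lift D to ℝ≥0 using ne_top_of_le_ne_top (by simp) hD
  have hcast (k : ℕ) : (2⁻¹ : ℝ≥0∞) ^ k = ((2⁻¹ ^ k : ℝ≥0) : ℝ≥0∞) := by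
    rw [ENNReal.coe_pow, ENNReal.coe_inv two_ne_zero, ENNReal.coe_ofNat]
  simp only [hcast] at hD ⊢
  norm_cast at hD₀ hD ⊢
  have hhalf : (2⁻¹ : ℝ≥0) < 1 := inv_lt_one_of_one_lt₀ one_lt_two
  obtain ⟨k, hkD, hDk⟩ := exists_nat_pow_near_of_lt_one (pos_iff_ne_zero.2 hD₀)
    (hD.trans (pow_le_one₀ zero_le hhalf.le)) (by positivity) hhalf
  refine ⟨k, Nat.lt_succ_iff.1 ((pow_lt_pow_iff_right_of_lt_one₀ (by positivity) hhalf).1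
    (hkD.trans_le hD)), hDk, ?_⟩
  rw [pow_succ, ← div_eq_mul_inv, div_lt_iff₀ two_pos, mul_comm] at hkD
  exact hkD.le

lemma exists_dyadic_scale {D : ℝ≥0∞} {j : ℕ} (hD : D ≤ 2⁻¹ ^ j) {s : ℝ} (hs : 0 < s) {η : ℝ≥0∞}
    (hη : η ≠ 0) :
    ∃ k ≥ j, D ≤ 2⁻¹ ^ k ∧ ((2⁻¹ : ℝ≥0∞) ^ k) ^ s ≤ 2 ^ s * D ^ s + η := by
  rcases eq_or_ne D 0 with rfl | hD₀
  · have hlim : Tendsto (fun k : ℕ => ((2⁻¹ : ℝ≥0∞) ^ k) ^ s) atTop (𝓝 (0 ^ s)) :=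
      (ENNReal.continuous_rpow_const.tendsto _).comp
        (ENNReal.tendsto_pow_atTop_nhds_zero_of_lt_one (by simp))
    rw [ENNReal.zero_rpow_of_pos hs] at hlim
    obtain ⟨k, hk, hkj⟩ := ((hlim.eventually_lt_const (pos_iff_ne_zero.2 hη)).and
      (eventually_ge_atTop j)).exists
    exact ⟨k, hkj, zero_le, hk.le.trans le_add_self⟩
  · obtain ⟨k, hkj, hDk, hkD⟩ := exists_dyadic_scale_of_ne_zero hD₀ hD
    refine ⟨k, hkj, hDk, le_self_add.trans' ?_⟩
    rw [← ENNReal.mul_rpow_of_nonneg _ _ hs.le]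
    gcongr

lemma exists_dyadic_cover_of_hausdorffMeasure_eq_zero {Y : Type*} [EMetricSpace Y]
    [MeasurableSpace Y] [BorelSpace Y] {R : Set Y} {s : ℝ} (hs : 0 < s) (hR : μH[s] R = 0) :
    ∃ (t : ℕ × ℕ → Set Y) (κ : ℕ × ℕ → ℕ), (∀ j, R ⊆ ⋃ m, t (j, m)) ∧
      (∀ p, p.1 ≤ κ p ∧ ediam (t p) ≤ 2⁻¹ ^ κ p) ∧ ∑' p, ((2⁻¹ : ℝ≥0∞) ^ κ p) ^ s ≠ ⊤ := by
  have hj (j : ℕ) : (0 : ℝ≥0∞) < 2⁻¹ ^ j := by simp [pos_iff_ne_zero]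
  choose t hRt hdiam hsum using fun j => exists_cover_of_hausdorffMeasure_eq_zero hs hR (hj j)
  obtain ⟨η, hη₀, hη⟩ := ENNReal.exists_pos_sum_of_countable one_ne_zero (ℕ × ℕ)
  choose κ hjκ hdiamκ hκ using fun p : ℕ × ℕ =>
    exists_dyadic_scale (hdiam p.1 p.2) hs (ENNReal.coe_ne_zero.2 (hη₀ p).ne')
  refine ⟨fun p => t p.1 p.2, κ, hRt, fun p => ⟨hjκ p, hdiamκ p⟩, ne_top_of_le_ne_top ?_
    (ENNReal.tsum_le_tsum hκ)⟩
  rw [ENNReal.tsum_add, ENNReal.tsum_mul_left, ENNReal.tsum_prod']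
  have hsum₂ : ∑' (j : ℕ) (m : ℕ), ediam (t j m) ^ s ≤ 2 :=
    (ENNReal.tsum_le_tsum hsum).trans_eq (by
      rw [ENNReal.tsum_geometric, ENNReal.one_sub_inv_two, inv_inv])
  have := ne_top_of_le_ne_top ENNReal.ofNat_ne_top hsum₂
  have := hη.ne_top
  finiteness

lemma exists_card_fiber_le_of_tsum_ne_top {ι : Type*} {κ : ι → ℕ} {s : ℝ}
    (hκ : ∑' p, ((2⁻¹ : ℝ≥0∞) ^ κ p) ^ s ≠ ⊤) :
    ∃ c : ℝ, 0 ≤ c ∧ ∃ F : ℕ → Finset ι, (∀ k p, κ p = k → p ∈ F k) ∧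
      ∀ k, ((F k).card : ℝ) ≤ c * 2 ^ (k * s) := by
  have hpow (k : ℕ) : ((2⁻¹ : ℝ≥0∞) ^ k) ^ s ≠ 0 :=
    (ENNReal.rpow_pos (by simp [pos_iff_ne_zero]) (by simp)).ne'
  choose hfin hcard using fun k : ℕ =>
    ENNReal.finset_card_const_le_le_of_tsum_le hκ le_rfl (hpow k)
  refine ⟨(∑' p, ((2⁻¹ : ℝ≥0∞) ^ κ p) ^ s).toReal, ENNReal.toReal_nonneg,
    fun k => (hfin k).toFinset, fun k p hp => ?_, fun k => ?_⟩
  · simp [hp]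
  · have hk := ENNReal.toReal_mono (by finiteness [hpow k]) (hcard k)
    rw [ENNReal.toReal_natCast, ENNReal.toReal_div, ← ENNReal.toReal_rpow,
      ENNReal.toReal_pow] at hk
    refine hk.trans_eq ?_
    rw [div_eq_mul_inv, ENNReal.toReal_inv, ENNReal.toReal_ofNat, inv_pow, Real.inv_rpow
      (by positivity), inv_inv, ← Real.rpow_natCast, ← Real.rpow_mul two_pos.le]

variable {n : ℕ}

/-- The index of the dyadic cube of side `2^{-k}` containing `x`. -/
def cellAt (k : ℕ) (x : E n) : Fin n → ℤ := gridCell (fun (y : E n) i => y i) (2⁻¹ ^ k) x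

lemma cellAt_apply (k : ℕ) (x : E n) (i : Fin n) : cellAt k x i = ⌊2 ^ k * x i⌋ := by
  simp [cellAt, gridCell, mul_comm]

lemma measurable_cellAt (k : ℕ) : Measurable (cellAt (n := n) k) := by
  refine measurable_pi_lambda _ fun i => ?_
  simp only [cellAt_apply]
  exact Int.measurable_floor.comp (by fun_prop)

lemma abs_cellAt_le {k B : ℕ} {x : E n} (hx : ∀ i, |x i| ≤ B) (i : Fin n) :
    |(cellAt k x i : ℝ)| ≤ (B + 1) * 2 ^ k := by
  have hpow : (1 : ℝ) ≤ 2 ^ k := one_le_pow₀ one_le_two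
  have habs : |2 ^ k * x i| ≤ 2 ^ k * B := by
    rw [abs_mul, abs_of_pos (by positivity)]
    gcongr
    exact hx i
  have hle := Int.floor_le (2 ^ k * x i)
  have hlt := Int.lt_floor_add_one (2 ^ k * x i)
  rw [cellAt_apply, abs_le]
  rw [abs_le] at habs
  constructor <;> linarith

lemma norm_latticeVec_cellAt_sub_le (k : ℕ) (x y : E n) :
    ‖(latticeVec (cellAt k x) - latticeVec (cellAt k y)) - (2 : ℝ) ^ k • (x - y)‖ ≤ n := by
  refine (norm_le_of_abs_apply_le (R := 1) fun i => ?_).trans_eq (mul_one _)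
  have hx := Int.floor_le ((2 : ℝ) ^ k * x i)
  have hx' := Int.lt_floor_add_one ((2 : ℝ) ^ k * x i)
  have hy := Int.floor_le ((2 : ℝ) ^ k * y i)
  have hy' := Int.lt_floor_add_one ((2 : ℝ) ^ k * y i)
  simp only [latticeVec, cellAt_apply, PiLp.sub_apply, PiLp.smul_apply, smul_eq_mul]
  rw [abs_le]
  constructor <;> linarith

lemma norm_sub_le_of_cellAt_eq {k : ℕ} {x y : E n} (h : cellAt k x = cellAt k y) :
    ‖x - y‖ ≤ n * 2⁻¹ ^ k :=
  norm_le_of_abs_apply_le fun i =>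
    (abs_sub_lt_of_gridCell_eq (by positivity) (congrFun h i)).le

lemma exists_card_le_cellAt_mem (k : ℕ) {t : Set (E n)} (ht : ediam t ≤ 2⁻¹ ^ k) :
    ∃ H : Finset (Fin n → ℤ), H.card ≤ 3 ^ n ∧ ∀ x ∈ t, cellAt k x ∈ H := by
  rcases t.eq_empty_or_nonempty with rfl | ⟨y, hy⟩
  · exact ⟨∅, by simp, by simp⟩
  refine ⟨Fintype.piFinset fun i => Finset.Icc (cellAt k y i - 1) (cellAt k y i + 1), ?_,
    fun x hx => Fintype.mem_piFinset.2 fun i => ?_⟩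
  · rw [Fintype.card_piFinset,
      Finset.prod_congr rfl (g := fun _ => 3) (fun i _ => by rw [Int.card_Icc]; lia)]
    simp
  · have hdist : dist x y ≤ 2⁻¹ ^ k := by
      have := ENNReal.toReal_mono (by finiteness) ((edist_le_ediam_of_mem hx hy).trans ht)
      simpa [edist_dist] using this
    have hxy : |x i - y i| ≤ (1 : ℤ) * 2⁻¹ ^ k := by
      rw [Int.cast_one, one_mul]
      exact (PiLp.norm_apply_le (x - y) i).trans (dist_eq_norm x y ▸ hdist)
    have hcell : |cellAt k x i - cellAt k y i| ≤ 1 := abs_gridCell_sub_le (by positivity) hxy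
    rw [abs_le] at hcell
    exact Finset.mem_Icc.2 ⟨by lia, by lia⟩

theorem exists_cells_of_hausdorffMeasure_eq_zero {R : Set (E n)} {s : ℝ} (hs : 0 < s)
    (hR : μH[s] R = 0) :
    ∃ K : ℝ, 0 ≤ K ∧ ∃ H : ℕ → Finset (Fin n → ℤ), (∀ k, ((H k).card : ℝ) ≤ K * 2 ^ (k * s)) ∧
      ∀ x ∈ R, ∃ᶠ k in atTop, cellAt k x ∈ H k := by
  classical
  obtain ⟨t, κ, hRt, ht, hκ⟩ := exists_dyadic_cover_of_hausdorffMeasure_eq_zero hs hR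
  choose H hH htH using fun p => exists_card_le_cellAt_mem (κ p) (ht p).2
  obtain ⟨c, hc, F, hκF, hF⟩ := exists_card_fiber_le_of_tsum_ne_top hκ
  refine ⟨c * 3 ^ n, by positivity, fun k => (F k).biUnion H, fun k => ?_, fun x hx => ?_⟩
  · calc (((F k).biUnion H).card : ℝ) ≤ (F k).card * 3 ^ n := by
          exact_mod_cast Finset.card_biUnion_le_card_mul _ _ _ fun p _ => hH p
      _ ≤ c * 2 ^ (k * s) * 3 ^ n := by gcongr; exact hF k
      _ = c * 3 ^ n * 2 ^ (k * s) := by ring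
  · refine frequently_atTop.2 fun j => ?_
    obtain ⟨m, hm⟩ := mem_iUnion.1 (hRt j hx)
    exact ⟨κ (j, m), (ht (j, m)).1, Finset.mem_biUnion.2 ⟨(j, m), hκF _ _ rfl, htH _ x hm⟩⟩

end DyadicCells

/-! ### Cone curves through sparse cells -/

section NearlyParallel

variable {F : Type*} [NormedAddCommGroup F] [InnerProductSpace ℝ F] {v w x y : F} {ε η : ℝ}

/-- The vector `y` lies in the cone of aperture `ε` around the line spanned by the unit
vector `v`. -/
def NearlyParallel (ε : ℝ) (v y : F) : Prop := ‖y - ⟪y, v⟫ • v‖ ≤ ε * |⟪y, v⟫|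

lemma abs_inner_le_add_norm_sub (hv : ‖v‖ ≤ 1) : |⟪y, v⟫| ≤ |⟪x, v⟫| + ‖x - y‖ := by
  calc |⟪y, v⟫| = |⟪x, v⟫ - ⟪x - y, v⟫| := by rw [inner_sub_left, _root_.sub_sub_cancel]
    _ ≤ |⟪x, v⟫| + |⟪x - y, v⟫| := abs_sub _ _
    _ ≤ |⟪x, v⟫| + ‖x - y‖ := by
      gcongr
      exact (abs_real_inner_le_norm _ _).trans (mul_le_of_le_one_right (norm_nonneg _) hv)

lemma norm_sub_inner_smul_le_add (hv : ‖v‖ ≤ 1) :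
    ‖x - ⟪x, v⟫ • v‖ ≤ ‖y - ⟪y, v⟫ • v‖ + 2 * ‖x - y‖ := by
  have hproj : ‖⟪x - y, v⟫ • v‖ ≤ ‖x - y‖ := by
    rw [norm_smul, Real.norm_eq_abs]
    calc |⟪x - y, v⟫| * ‖v‖ ≤ ‖x - y‖ * ‖v‖ * ‖v‖ := by
          gcongr
          exact abs_real_inner_le_norm _ _
      _ ≤ ‖x - y‖ * 1 * 1 := by gcongr
      _ = ‖x - y‖ := by ring
  calc ‖x - ⟪x, v⟫ • v‖ = ‖(y - ⟪y, v⟫ • v) + ((x - y) - ⟪x - y, v⟫ • v)‖ := by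
        rw [inner_sub_left, _root_.sub_smul]
        congr 1
        abel
    _ ≤ ‖y - ⟪y, v⟫ • v‖ + (‖x - y‖ + ‖⟪x - y, v⟫ • v‖) :=
        (norm_add_le _ _).trans (by gcongr; exact norm_sub_le _ _)
    _ ≤ ‖y - ⟪y, v⟫ • v‖ + 2 * ‖x - y‖ := by linarith

lemma NearlyParallel.const_smul (h : NearlyParallel ε v y) (c : ℝ) :
    NearlyParallel ε v (c • y) := by
  unfold NearlyParallel
  rw [inner_smul_left, conj_trivial, ← smul_smul, ← smul_sub, norm_smul, Real.norm_eq_abs,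
    abs_mul, mul_left_comm]
  gcongr
  exact h

lemma NearlyParallel.norm_sub_inner_smul_le (h : NearlyParallel ε v y) (hv : ‖v‖ ≤ 1)
    (hε₀ : 0 ≤ ε) (hε₁ : ε ≤ 1) {C : ℝ} (hxy : ‖x - y‖ ≤ C) :
    ‖x - ⟪x, v⟫ • v‖ ≤ ε * |⟪x, v⟫| + 3 * C := by
  calc ‖x - ⟪x, v⟫ • v‖ ≤ ε * |⟪y, v⟫| + 2 * ‖x - y‖ :=
        (norm_sub_inner_smul_le_add hv).trans (by gcongr; exact h)
    _ ≤ ε * (|⟪x, v⟫| + ‖x - y‖) + 2 * ‖x - y‖ := by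
        gcongr
        exact abs_inner_le_add_norm_sub hv
    _ = ε * |⟪x, v⟫| + (ε * ‖x - y‖ + 2 * ‖x - y‖) := by ring
    _ ≤ ε * |⟪x, v⟫| + (1 * C + 2 * C) := by gcongr
    _ = ε * |⟪x, v⟫| + 3 * C := by ring

lemma nearlyParallel_of_norm_sub_smul_le {r : ℝ} (hv : ‖v‖ = 1) (hη₀ : 0 ≤ η) (hη : η ≤ 1 / 2)
    (h : ‖y - r • v‖ ≤ η * |r|) : NearlyParallel (4 * η) v y := by
  have hr : ⟪r • v, v⟫ = r := by
    rw [inner_smul_left, real_inner_self_eq_norm_sq, hv]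
    simp
  have hle : |r| ≤ 2 * |⟪y, v⟫| := by
    have hry := abs_inner_le_add_norm_sub (x := y) (y := r • v) hv.le
    rw [hr] at hry
    have := mul_le_mul_of_nonneg_right hη (abs_nonneg r)
    linarith
  calc ‖y - ⟪y, v⟫ • v‖ ≤ ‖r • v - ⟪r • v, v⟫ • v‖ + 2 * ‖y - r • v‖ :=
        norm_sub_inner_smul_le_add hv.le
    _ = 2 * ‖y - r • v‖ := by rw [hr, sub_self, norm_zero, zero_add]
    _ ≤ 2 * (η * (2 * |⟪y, v⟫|)) := by
        gcongr
        exact h.trans (by gcongr)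
    _ = 4 * η * |⟪y, v⟫| := by ring

lemma eventually_nearlyParallel_of_hasDerivWithinAt {σ : ℝ → F} {K : Set ℝ} {t : ℝ} {u : F}
    (hσ : HasDerivWithinAt σ u K t) (hu : u ≠ 0) (hv : ‖v‖ = 1) (hη₀ : 0 < η) (hη : η ≤ 1 / 4)
    (huv : ‖u - ‖u‖ • v‖ ≤ η * ‖u‖) : ∀ᶠ s in 𝓝[K] t, NearlyParallel (8 * η) v (σ s - σ t) := by
  filter_upwards [(hasDerivWithinAt_iff_isLittleO.1 hσ).def (mul_pos hη₀ (norm_pos_iff.2 hu))]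
    with s hs
  have hlin : ‖(σ s - σ t) - ((s - t) * ‖u‖) • v‖ ≤ 2 * η * |(s - t) * ‖u‖| := by
    calc ‖(σ s - σ t) - ((s - t) * ‖u‖) • v‖
        = ‖(σ s - σ t - (s - t) • u) + (s - t) • (u - ‖u‖ • v)‖ := by
          rw [smul_sub, smul_smul, sub_add_sub_cancel]
      _ ≤ η * ‖u‖ * ‖s - t‖ + ‖s - t‖ * (η * ‖u‖) := by
          refine (norm_add_le _ _).trans ?_
          rw [norm_smul]
          gcongr
      _ = 2 * η * |(s - t) * ‖u‖| := by
          rw [abs_mul, abs_norm, Real.norm_eq_abs]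
          ring
  convert nearlyParallel_of_norm_sub_smul_le hv (by positivity) (by linarith) hlin using 1
  ring

lemma exists_finite_net {F : Type*} [NormedAddCommGroup F] [NormedSpace ℝ F] [ProperSpace F]
    {η : ℝ} (hη : 0 < η) :
    ∃ V : Finset F, (∀ v ∈ V, ‖v‖ = 1) ∧ ∀ u ≠ 0, ∃ v ∈ V, ‖u - ‖u‖ • v‖ ≤ η * ‖u‖ := by
  obtain ⟨t, ht, htf, hcov⟩ := finite_cover_balls_of_compact (isCompact_sphere (0 : F) 1) hη
  refine ⟨htf.toFinset, fun v hv => by simpa using ht (htf.mem_toFinset.1 hv), fun u hu => ?_⟩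
  have hu' : ‖u‖⁻¹ • u ∈ sphere (0 : F) 1 := by simp [norm_smul, hu]
  obtain ⟨v, hv, hvu⟩ := mem_iUnion₂.1 (hcov hu')
  refine ⟨v, htf.mem_toFinset.2 hv, ?_⟩
  rw [mem_ball, dist_eq_norm] at hvu
  calc ‖u - ‖u‖ • v‖ = ‖‖u‖ • (‖u‖⁻¹ • u - v)‖ := by
        rw [smul_sub, smul_inv_smul₀ (norm_ne_zero_iff.2 hu)]
    _ ≤ η * ‖u‖ := by
        rw [norm_smul, norm_norm, mul_comm]
        gcongr

end NearlyParallel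

section Direction

variable {F : Type*} [NormedAddCommGroup F] [InnerProductSpace ℝ F] {σ : ℝ → F} {K : Set ℝ}
  {w : F} {θ δ ε : ℝ}

lemma le_norm_of_hasDerivWithinAt {t : ℝ} {u : F} (hu : HasDerivWithinAt σ u K t)
    (hacc : AccPt t (𝓟 K)) (hσ : ∀ s ∈ K, δ * |s - t| ≤ ‖σ s - σ t‖) : δ ≤ ‖u‖ := by
  have : (𝓝[K \ {t}] t).NeBot := accPt_principal_iff_nhdsWithin.1 hacc
  refine ge_of_tendsto (hasDerivWithinAt_iff_tendsto_slope.1 hu).norm ?_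
  filter_upwards [self_mem_nhdsWithin] with s hs
  rw [slope_def_module, norm_smul, norm_inv, Real.norm_eq_abs, ← div_eq_inv_mul,
    le_div_iff₀ (abs_pos.2 (sub_ne_zero.2 hs.2))]
  exact hσ s hs.1

lemma mul_norm_le_abs_inner_of_hasDerivWithinAt {t : ℝ} {u : F} (hu : HasDerivWithinAt σ u K t)
    (hacc : AccPt t (𝓟 K)) (hσ : ∀ s ∈ K, θ * ‖σ s - σ t‖ ≤ |⟪σ s - σ t, w⟫|) :
    θ * ‖u‖ ≤ |⟪u, w⟫| := by
  have : (𝓝[K \ {t}] t).NeBot := accPt_principal_iff_nhdsWithin.1 hacc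
  have hslope := hasDerivWithinAt_iff_tendsto_slope.1 hu
  refine le_of_tendsto_of_tendsto (hslope.norm.const_mul θ)
    ((hslope.inner tendsto_const_nhds).abs) ?_
  filter_upwards [self_mem_nhdsWithin] with s hs
  rw [slope_def_module, norm_smul, inner_smul_left, abs_mul, conj_trivial, Real.norm_eq_abs,
    mul_left_comm]
  gcongr
  exact hσ s hs.1

lemma exists_hasDerivWithinAt_mem_cone {t : ℝ} (ht : DifferentiableWithinAt ℝ σ K t)
    (hw : ‖w‖ = 1) (hθ : θ ≤ 1) (hδ : 0 < δ) (hσ : ∀ s ∈ K, δ * |s - t| ≤ ‖σ s - σ t‖)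
    (hcone : ∀ s ∈ K, θ * ‖σ s - σ t‖ ≤ |⟪σ s - σ t, w⟫|) :
    ∃ u ≠ 0, HasDerivWithinAt σ u K t ∧ θ * ‖u‖ ≤ |⟪u, w⟫| := by
  by_cases hacc : AccPt t (𝓟 K)
  · have hu := ht.hasDerivWithinAt
    exact ⟨_, norm_pos_iff.1 (hδ.trans_le (le_norm_of_hasDerivWithinAt hu hacc hσ)), hu,
      mul_norm_le_abs_inner_of_hasDerivWithinAt hu hacc hcone⟩
  · -- every vector is a derivative at an isolated point
    refine ⟨w, norm_ne_zero_iff.1 (hw ▸ one_ne_zero),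
      HasFDerivWithinAt.of_not_accPt hacc, ?_⟩
    simpa [real_inner_self_eq_norm_sq, hw] using hθ

lemma ae_exists_direction [FiniteDimensional ℝ F] (hw : ‖w‖ = 1) (hε : 0 < ε) (hεθ : ε ≤ θ)
    (hθ : θ ≤ 1) (hδ : 0 < δ) {V : Finset F} (hV : ∀ v ∈ V, ‖v‖ = 1)
    (hnet : ∀ u ≠ 0, ∃ v ∈ V, ‖u - ‖u‖ • v‖ ≤ ε / 8 * ‖u‖) {L : ℝ≥0}
    (hL : LipschitzOnWith L σ K) (hσ : ∀ s ∈ K, ∀ t ∈ K, δ * |s - t| ≤ ‖σ s - σ t‖)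
    (hcone : ∀ s ∈ K, ∀ t ∈ K, θ * ‖σ s - σ t‖ ≤ |⟪σ s - σ t, w⟫|) :
    ∀ᵐ t, t ∈ K → ∃ v ∈ V, θ / 2 < |⟪v, w⟫| ∧
      ∀ᶠ s in 𝓝[K] t, NearlyParallel ε v (σ s - σ t) := by
  filter_upwards [hL.ae_differentiableWithinAt_of_mem_real] with t ht htK
  obtain ⟨u, hu, hσu, huw⟩ := exists_hasDerivWithinAt_mem_cone (ht htK) hw hθ hδ
    (fun s hs => hσ s hs t htK) fun s hs => hcone s hs t htK
  obtain ⟨v, hvV, huv⟩ := hnet u hu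
  refine ⟨v, hvV, ?_, ?_⟩
  · have hlow : θ * ‖u‖ ≤ (|⟪v, w⟫| + ε / 8) * ‖u‖ :=
      calc θ * ‖u‖ ≤ |⟪‖u‖ • v, w⟫| + ‖‖u‖ • v - u‖ :=
            huw.trans (abs_inner_le_add_norm_sub hw.le)
        _ ≤ ‖u‖ * |⟪v, w⟫| + ε / 8 * ‖u‖ := by
            rw [inner_smul_left, conj_trivial, abs_mul, abs_norm, norm_sub_rev]
            gcongr
        _ = (|⟪v, w⟫| + ε / 8) * ‖u‖ := by ring
    have := le_of_mul_le_mul_right hlow (norm_pos_iff.2 hu)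
    linarith
  · convert eventually_nearlyParallel_of_hasDerivWithinAt hσu hu (hV v hvV)
      (show 0 < ε / 8 by positivity) (by linarith) huv using 3
    ring

lemma exists_countable_pieces {Y : Type*} [PseudoMetricSpace Y] [TopologicalSpace.SeparableSpace Y]
    [Nonempty Y] (K : Set Y) (P : Y → Y → Prop) :
    ∃ A : ℕ × ℕ → Set Y, (∀ i, A i ⊆ K) ∧ (∀ i, ∀ s ∈ A i, ∀ t ∈ A i, P s t) ∧
      ∀ t ∈ K, (∀ᶠ s in 𝓝[K] t, P s t) → ∃ i, t ∈ A i := by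
  refine ⟨fun i => {t ∈ K | t ∈ ball (TopologicalSpace.denseSeq Y i.1) (1 / (i.2 + 1) / 2) ∧
    ∀ s ∈ K, dist s t < 1 / (i.2 + 1) → P s t}, fun i t ht => ht.1, fun i s hs t ht => ?_,
    fun t ht hP => ?_⟩
  · refine ht.2.2 s hs.1 ((dist_triangle_right _ _ _).trans_lt (add_lt_add hs.2.1 ht.2.1)
      |>.trans_eq (add_halves _))
  · obtain ⟨r, hr, hball⟩ := Metric.eventually_nhds_iff.1 (eventually_nhdsWithin_iff.1 hP)
    obtain ⟨m, hm⟩ := exists_nat_one_div_lt hr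
    obtain ⟨a, ha⟩ := (TopologicalSpace.denseRange_denseSeq Y).exists_dist_lt t
      (show (0 : ℝ) < 1 / (m + 1) / 2 by positivity)
    exact ⟨(a, m), ht, ha, fun s hs hst => hball (hst.trans hm) hs⟩

end Direction

section CellsAlongCurves

variable {n : ℕ} {ε δ : ℝ} {v : E n} {A : Set ℝ} {σ : ℝ → E n}

lemma isTube_of_forall_exists_cellAt (hv : ‖v‖ ≤ 1) (hε₀ : 0 ≤ ε) (hε₁ : ε ≤ 1)
    (hσv : ∀ s ∈ A, ∀ t ∈ A, NearlyParallel ε v (σ s - σ t)) {k : ℕ} {T : Finset (Fin n → ℤ)}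
    (hT : ∀ p ∈ T, ∃ t ∈ A, cellAt k (σ t) = p) : IsTube ε (3 * n) v T := by
  intro p hp q hq
  obtain ⟨s, hs, rfl⟩ := hT p hp
  obtain ⟨t, ht, rfl⟩ := hT q hq
  exact ((hσv s hs t ht).const_smul _).norm_sub_inner_smul_le hv hε₀ hε₁
    (norm_latticeVec_cellAt_sub_le k _ _)

lemma volume_setOf_cellAt_mem_le (hδ : 0 < δ)
    (hσ : ∀ s ∈ A, ∀ t ∈ A, δ * |s - t| ≤ ‖σ s - σ t‖) (k : ℕ) (T : Finset (Fin n → ℤ)) :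
    volume {t | t ∈ A ∧ cellAt k (σ t) ∈ T} ≤ ENNReal.ofReal (T.card * (n / δ * 2⁻¹ ^ k)) := by
  have hone (p : Fin n → ℤ) : volume {t | t ∈ A ∧ cellAt k (σ t) = p} ≤
      ENNReal.ofReal (n / δ * 2⁻¹ ^ k) := by
    refine (Real.volume_le_diam _).trans (ediam_le ?_)
    rintro s ⟨hs, hsp⟩ t ⟨ht, htp⟩
    rw [edist_dist, Real.dist_eq]
    refine ENNReal.ofReal_le_ofReal ?_
    rw [div_mul_eq_mul_div, le_div_iff₀' hδ]
    exact (hσ s hs t ht).trans (norm_sub_le_of_cellAt_eq (hsp.trans htp.symm))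
  calc volume {t | t ∈ A ∧ cellAt k (σ t) ∈ T}
      ≤ volume (⋃ p ∈ T, {t | t ∈ A ∧ cellAt k (σ t) = p}) :=
        measure_mono fun t ht => mem_iUnion₂.2 ⟨_, ht.2, ht.1, rfl⟩
    _ ≤ ∑ _p ∈ T, ENNReal.ofReal (n / δ * 2⁻¹ ^ k) :=
        (measure_biUnion_finset_le _ _).trans (Finset.sum_le_sum fun p _ => hone p)
    _ = ENNReal.ofReal (T.card * (n / δ * 2⁻¹ ^ k)) := by
        rw [Finset.sum_const, nsmul_eq_mul, ← ENNReal.ofReal_natCast,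
          ← ENNReal.ofReal_mul (by positivity)]

lemma two_rpow_mul_two_inv_pow (k : ℕ) (κ : ℝ) :
    (2 : ℝ) ^ (k * (1 - κ)) * 2⁻¹ ^ k = (2 ^ (-κ)) ^ k := by
  rw [← Real.rpow_natCast, ← Real.rpow_natCast, ← Real.rpow_mul two_pos.le,
    Real.inv_rpow two_pos.le, ← Real.rpow_neg two_pos.le, ← Real.rpow_add two_pos]
  congr 1
  ring

variable {V : Finset (E n)} {τ κ C : ℝ} {H : ℕ → Finset (Fin n → ℤ)}
  {j : ℕ → (Fin n → ℤ) → Finset (E n)}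

lemma volume_setOf_frequently_eq_zero
    (hj : ∀ k, IsSplitting V τ ε (3 * n) (H k) (C * 2 ^ (k * (1 - κ))) (j k)) (hκ : 0 < κ)
    (hvV : v ∈ V) (hv : ‖v‖ ≤ 1) (hε₀ : 0 ≤ ε) (hε₁ : ε ≤ 1) (hδ : 0 < δ)
    (hσ : ∀ s ∈ A, ∀ t ∈ A, δ * |s - t| ≤ ‖σ s - σ t‖)
    (hσv : ∀ s ∈ A, ∀ t ∈ A, NearlyParallel ε v (σ s - σ t)) :
    volume {t | ∃ᶠ k in atTop, t ∈ A ∧ cellAt k (σ t) ∈ H k ∧ v ∉ j k (cellAt k (σ t))} = 0 := by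
  classical
  have hbound (k : ℕ) : volume {t | t ∈ A ∧ cellAt k (σ t) ∈ H k ∧ v ∉ j k (cellAt k (σ t))} ≤
      ENNReal.ofReal (C * (n / δ) * ((2 : ℝ) ^ (-κ)) ^ k) := by
    set T := {p ∈ H k | v ∉ j k p ∧ ∃ t ∈ A, cellAt k (σ t) = p}
    have hcard : (T.card : ℝ) ≤ C * 2 ^ (k * (1 - κ)) :=
      (hj k).2 v hvV T (Finset.filter_subset _ _) (fun p hp => (Finset.mem_filter.1 hp).2.1)
        (isTube_of_forall_exists_cellAt hv hε₀ hε₁ hσv fun p hp => (Finset.mem_filter.1 hp).2.2)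
    calc volume {t | t ∈ A ∧ cellAt k (σ t) ∈ H k ∧ v ∉ j k (cellAt k (σ t))}
        ≤ volume {t | t ∈ A ∧ cellAt k (σ t) ∈ T} :=
          measure_mono fun t ht => ⟨ht.1, Finset.mem_filter.2 ⟨ht.2.1, ht.2.2, t, ht.1, rfl⟩⟩
      _ ≤ ENNReal.ofReal (T.card * (n / δ * 2⁻¹ ^ k)) := volume_setOf_cellAt_mem_le hδ hσ k T
      _ ≤ ENNReal.ofReal (C * 2 ^ (k * (1 - κ)) * (n / δ * 2⁻¹ ^ k)) := by gcongr
      _ = ENNReal.ofReal (C * (n / δ) * ((2 : ℝ) ^ (-κ)) ^ k) := by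
          rw [← two_rpow_mul_two_inv_pow]
          ring_nf
  have hr : (2 : ℝ) ^ (-κ) < 1 := Real.rpow_lt_one_of_one_lt_of_neg one_lt_two (by linarith)
  exact measure_setOfPred_frequently_eq_zero (ne_top_of_le_ne_top
    ((summable_geometric_of_lt_one (by positivity) hr).mul_left _).tsum_ofReal_ne_top
    (ENNReal.tsum_le_tsum hbound))

/-- The points that for infinitely many `k` lie in a dyadic cell of `H k` to which `j k` assigns
the set of directions `J`. -/
def limsupCells (H : ℕ → Finset (Fin n → ℤ)) (j : ℕ → (Fin n → ℤ) → Finset (E n))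
    (J : Finset (E n)) : Set (E n) :=
  {x | ∃ᶠ k in atTop, cellAt k x ∈ H k ∧ j k (cellAt k x) = J}

lemma measurableSet_limsupCells (J : Finset (E n)) : MeasurableSet (limsupCells H j J) := by
  have : limsupCells H j J = limsup (fun k => cellAt k ⁻¹' {p | p ∈ H k ∧ j k p = J}) atTop := by
    ext x
    rw [mem_limsup_iff_frequently_mem]
    rfl
  rw [this]
  exact .measurableSet_limsup fun k => measurable_cellAt k (to_countable _).measurableSet

lemma exists_mem_limsupCells {𝒥 : Finset (Finset (E n))} (hj : ∀ k p, j k p ∈ 𝒥) {x : E n}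
    (hx : ∃ᶠ k in atTop, cellAt k x ∈ H k) : ∃ J ∈ 𝒥, x ∈ limsupCells H j J := by
  by_contra! hcon
  have hev : ∀ᶠ k in atTop, ∀ J ∈ 𝒥, ¬(cellAt k x ∈ H k ∧ j k (cellAt k x) = J) :=
    (eventually_all_finset 𝒥).2 fun J hJ => not_frequently.1 (hcon J hJ)
  obtain ⟨k, hkH, hk⟩ := (hx.and_eventually hev).exists
  exact hk _ (hj _ _) ⟨hkH, rfl⟩

theorem volume_setOf_mem_limsupCells_eq_zero {w : E n} {θ : ℝ} {K : Set ℝ} {L : ℝ≥0}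
    {J : Finset (E n)} (hj : ∀ k, IsSplitting V τ ε (3 * n) (H k) (C * 2 ^ (k * (1 - κ))) (j k))
    (hκ : 0 < κ) (hV : ∀ v ∈ V, ‖v‖ = 1)
    (hnet : ∀ u ≠ 0, ∃ v ∈ V, ‖u - ‖u‖ • v‖ ≤ ε / 8 * ‖u‖) (hε : 0 < ε) (hεθ : ε ≤ θ)
    (hθ : θ ≤ 1) (hδ : 0 < δ) (hw : ‖w‖ = 1) (hJ : ∀ v ∈ J, |⟪v, w⟫| ≤ θ / 2)
    (hL : LipschitzOnWith L σ K) (hσ : ∀ s ∈ K, ∀ t ∈ K, δ * |s - t| ≤ ‖σ s - σ t‖)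
    (hcone : ∀ s ∈ K, ∀ t ∈ K, θ * ‖σ s - σ t‖ ≤ |⟪σ s - σ t, w⟫|) :
    volume {t | t ∈ K ∧ σ t ∈ limsupCells H j J} = 0 := by
  choose A hAK hAv hA using fun v =>
    exists_countable_pieces K fun s t => NearlyParallel ε v (σ s - σ t)
  have hnull : volume (⋃ v ∈ V, ⋃ i, {t | ∃ᶠ k in atTop,
      t ∈ A v i ∧ cellAt k (σ t) ∈ H k ∧ v ∉ j k (cellAt k (σ t))}) = 0 :=
    (measure_biUnion_null_iff V.countable_toSet).2 fun v hv => measure_iUnion_null fun i =>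
      volume_setOf_frequently_eq_zero hj hκ hv (hV v hv).le hε.le (hεθ.trans hθ) hδ
        (fun s hs t ht => hσ s (hAK v i hs) t (hAK v i ht)) (hAv v i)
  rw [measure_eq_zero_iff_ae_notMem] at hnull ⊢
  filter_upwards [hnull, ae_exists_direction hw hε hεθ hθ hδ hV hnet hL hσ hcone] with t ht hdir
  rintro ⟨htK, htJ⟩
  obtain ⟨v, hvV, hvw, hev⟩ := hdir htK
  obtain ⟨i, hi⟩ := hA v t htK hev
  have hvJ : v ∉ J := fun hv => (hJ v hv).not_gt hvw
  exact ht (mem_iUnion₂.2 ⟨v, hvV, mem_iUnion.2 ⟨i, htJ.mono fun k hk =>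
    ⟨hi, hk.1, hk.2 ▸ hvJ⟩⟩⟩)

end CellsAlongCurves

/-! ### Singular sets -/

section SingularSets

variable {Y : Type*} [MetricSpace Y] {n : ℕ} {φ : Y → E n}

lemma exists_hausdorffMeasure_range_eq_zero {L : ℝ≥0} (hφ : LipschitzWith L φ)
    (hdim : dimH (univ : Set Y) < n) : ∃ s : ℝ, 0 < s ∧ s < n ∧ μH[s] (range φ) = 0 := by
  obtain ⟨s, hs, hsn⟩ := ENNReal.lt_iff_exists_nnreal_btwn.1 (hφ.dimH_range_le.trans_lt hdim)
  exact ⟨s, by exact_mod_cast zero_le.trans_lt hs, by exact_mod_cast hsn,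
    hausdorffMeasure_of_dimH_lt hs⟩

lemma Fragment.fn_mem_graph (γ : Fragment Y) {t : ℝ} (ht : t ∈ γ.dom) : (t, γ.fn t) ∈ γ.graph := by
  have h : ∃ x, (t, x) ∈ γ.graph := by
    obtain ⟨p, hp, rfl⟩ := ht
    exact ⟨p.2, hp⟩
  unfold Fragment.fn
  rw [dif_pos h]
  exact h.choose_spec

lemma Fragment.fn_fst (γ : Fragment Y) {p : ℝ × Y} (hp : p ∈ γ.graph) : γ.fn p.1 = p.2 := by
  have hdist := (γ.2.2 _ (γ.fn_mem_graph ⟨p, hp, rfl⟩) _ hp).2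
  rwa [_root_.sub_self, abs_zero, mul_zero, dist_le_zero] at hdist

lemma Fragment.lipschitzOnWith_fn (γ : Fragment Y) : LipschitzOnWith 2 γ.fn γ.dom :=
  .of_dist_le_mul fun _ hs _ ht => (γ.2.2 _ (γ.fn_mem_graph hs) _ (γ.fn_mem_graph ht)).2

variable [MeasurableSpace Y] [BorelSpace Y]

lemma Fragment.hausdorffMeasure_im_inter_eq_zero (γ : Fragment Y) {S : Set Y}
    (h : volume {t | t ∈ γ.dom ∧ γ.fn t ∈ S} = 0) : μH[1] (γ.im ∩ S) = 0 := by
  have hsub : γ.im ∩ S ⊆ γ.fn '' {t | t ∈ γ.dom ∧ γ.fn t ∈ S} := by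
    rintro _ ⟨⟨p, hp, rfl⟩, hpS⟩
    exact ⟨p.1, ⟨⟨p, hp, rfl⟩, by rwa [γ.fn_fst hp]⟩, γ.fn_fst hp⟩
  refine measure_mono_null hsub (nonpos_iff_eq_zero.1 ?_)
  refine ((γ.lipschitzOnWith_fn.mono fun t ht => ht.1).hausdorffMeasure_image_le
    zero_le_one).trans_eq ?_
  rw [hausdorffMeasure_real, h, mul_zero]

lemma ConeNull.iUnion {ι : Type*} [Countable ι] {C : Set (E n)} {S : ι → Set Y}
    (h : ∀ i, ConeNull φ C (S i)) : ConeNull φ C (⋃ i, S i) := by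
  intro γ hγ
  rw [inter_iUnion]
  exact measure_iUnion_null fun i => h i γ hγ

lemma MemScal.of_finite_cover {S : Set Y} (hS : MeasurableSet S)
    (h : ∀ θ ∈ Ioo (0 : ℝ) 1, ∃ T : Set (Set Y), T.Finite ∧ ⋃₀ T = S ∧
      ∀ A ∈ T, MeasurableSet A ∧ ∃ w, ‖w‖ = 1 ∧ ConeNull φ (cone w θ) A) : MemScal φ S := by
  refine ⟨hS, fun θ hθ => ?_⟩
  obtain ⟨T, hT, rfl, hnull⟩ := h θ hθ
  obtain ⟨m, S', -, hS'⟩ := hT.fin_param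
  have hmem : ∀ i, S' i ∈ T := fun i => hS' ▸ mem_range_self i
  choose hmeas w hw hwS using fun i => hnull (S' i) (hmem i)
  exact ⟨m, S', w, by rw [← hS', sUnion_range], fun i => ⟨hmeas i, hw i, hwS i⟩⟩

variable {V : Finset (E n)} {τ ε θ : ℝ}

lemma coneNull_preimage_limsupCells {L : ℝ≥0} {C κ : ℝ} {H : ℕ → Finset (Fin n → ℤ)}
    {j : ℕ → (Fin n → ℤ) → Finset (E n)} {J : Finset (E n)} {w : E n} (hφ : LipschitzWith L φ)
    (hj : ∀ k, IsSplitting V τ ε (3 * n) (H k) (C * 2 ^ (k * (1 - κ))) (j k)) (hκ : 0 < κ)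
    (hV : ∀ v ∈ V, ‖v‖ = 1) (hnet : ∀ u ≠ 0, ∃ v ∈ V, ‖u - ‖u‖ • v‖ ≤ ε / 8 * ‖u‖)
    (hε : 0 < ε) (hεθ : ε ≤ θ) (hθ : θ ≤ 1) (hw : ‖w‖ = 1) (hJ : ∀ v ∈ J, |⟪v, w⟫| ≤ θ / 2) :
    ConeNull φ (cone w θ) (φ ⁻¹' limsupCells H j J) := by
  intro γ hγ
  obtain ⟨δ, hδ, hγ⟩ := hγ
  have hmem := fun s hs t ht => hγ _ (γ.fn_mem_graph (t := s) hs) _ (γ.fn_mem_graph (t := t) ht)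
  have hvol : volume {t | t ∈ γ.dom ∧ (φ ∘ γ.fn) t ∈ limsupCells H j J} = 0 :=
    volume_setOf_mem_limsupCells_eq_zero hj hκ hV hnet hε hεθ hθ hδ hw hJ
      (hφ.comp_lipschitzOnWith γ.lipschitzOnWith_fn)
      (fun s hs t ht => by simpa using (hmem s hs t ht).2) fun s hs t ht => (hmem s hs t ht).1
  exact γ.hausdorffMeasure_im_inter_eq_zero hvol

-- `SparseSplitting` only splits bounded sets of cells, with constants depending on the bound.
lemma SparseSplitting.exists_isSplitting {C₀ s K : ℝ} {H₀ : ℕ → Finset (Fin n → ℤ)}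
    (hV : SparseSplitting V τ ε C₀ s) (hK : 0 ≤ K)
    (hH₀ : ∀ k, ((H₀ k).card : ℝ) ≤ K * 2 ^ (k * s)) :
    ∃ (H : ℕ → ℕ → Finset (Fin n → ℤ)) (j : ℕ → ℕ → (Fin n → ℤ) → Finset (E n)) (C κ : ℕ → ℝ),
      (∀ B, 0 < κ B) ∧
      (∀ B k, IsSplitting V τ ε C₀ (H B k) (C B * 2 ^ (k * (1 - κ B))) (j B k)) ∧
      ∀ x, (∃ᶠ k in atTop, cellAt k x ∈ H₀ k) → ∃ B, ∃ᶠ k in atTop, cellAt k x ∈ H B k := by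
  classical
  let H : ℕ → ℕ → Finset (Fin n → ℤ) := fun B k =>
    {p ∈ H₀ k | ∀ i, |(p i : ℝ)| ≤ ((B : ℝ) + 1) * 2 ^ k}
  choose C κ _ hκ hsplit using fun B : ℕ => hV K ((B : ℝ) + 1) hK
  choose j hj using fun B k => hsplit B k (H B k) (fun p hp => (Finset.mem_filter.1 hp).2)
    ((Nat.cast_le.2 (Finset.card_filter_le _ _)).trans (hH₀ k))
  refine ⟨H, j, C, κ, hκ, hj, fun x hx => ?_⟩
  obtain ⟨B, hB⟩ := exists_nat_ge ‖x‖
  exact ⟨B, hx.mono fun k hk => Finset.mem_filter.2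
    ⟨hk, abs_cellAt_le fun i => (PiLp.norm_apply_le x i).trans hB⟩⟩

theorem memScal_univ {L : ℝ≥0} (hφ : LipschitzWith L φ) (hdim : dimH (univ : Set Y) < n) :
    MemScal φ univ := by
  have hn : 1 ≤ n := Nat.one_le_iff_ne_zero.2 fun h => by simp [h] at hdim
  obtain ⟨s, hs, hsn, hφs⟩ := exists_hausdorffMeasure_range_eq_zero hφ hdim
  obtain ⟨K, hK, H₀, hH₀, hcells⟩ := exists_cells_of_hausdorffMeasure_eq_zero hs hφs
  refine .of_finite_cover .univ fun θ hθ => ?_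
  obtain ⟨ε, hε, hεθ, hsparse⟩ := exists_sparseSplitting hn (half_pos hθ.1) hsn
    (C₀ := 3 * n) (by linarith [n.cast_nonneg (α := ℝ)]) hθ.1
  obtain ⟨V, hV, hnet⟩ := exists_finite_net (F := E n) (by linarith : 0 < ε / 8)
  obtain ⟨H, j, C, κ, hκ, hj, hH⟩ :=
    (hsparse V fun v hv => (hV v hv).le).exists_isSplitting hK hH₀
  let 𝒥 : Set (Finset (E n)) := {J | J ⊆ V ∧ NearHyperplane (θ / 2) (J : Set (E n))}
  let A : Finset (E n) → Set Y := fun J => ⋃ B, φ ⁻¹' limsupCells (H B) (j B) J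
  have h𝒥 : 𝒥.Finite := V.powerset.finite_toSet.subset fun J hJ => Finset.mem_powerset.2 hJ.1
  refine ⟨A '' 𝒥, h𝒥.image A, eq_univ_of_forall fun y => ?_, ?_⟩
  · obtain ⟨B, hB⟩ := hH (φ y) (hcells _ (mem_range_self y))
    obtain ⟨J, hJ, hyJ⟩ := exists_mem_limsupCells (j := j B) (𝒥 := h𝒥.toFinset)
      (fun k p => h𝒥.mem_toFinset.2 ((hj B k).1 p)) hB
    exact ⟨A J, mem_image_of_mem A (h𝒥.mem_toFinset.1 hJ), mem_iUnion.2 ⟨B, hyJ⟩⟩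
  · rintro _ ⟨J, ⟨-, w, hw, hJ⟩, rfl⟩
    exact ⟨.iUnion fun B => hφ.continuous.measurable (measurableSet_limsupCells J), w, hw,
      .iUnion fun B => coneNull_preimage_limsupCells hφ (hj B) (hκ B) hV hnet hε hεθ hθ.2.le hw hJ⟩

end SingularSets

/-! ### Independence and differentiability -/

section FlatAt

open Asymptotics

variable {Y : Type*} [MetricSpace Y] {f g : Y → ℝ} {x : Y} {K : ℝ≥0}

/-- The increments of `f` at `x` are `o(d(x, ·))`, so that `f` has zero derivative at `x` in
any chart. -/
def FlatAt (f : Y → ℝ) (x : Y) : Prop :=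
  (fun y => f y - f x) =o[𝓝 x] fun y => dist y x

lemma FlatAt.sub (hf : FlatAt f x) (hg : FlatAt g x) : FlatAt (fun y => f y - g y) x :=
  (IsLittleO.sub hf hg).congr_left fun y => by ring

lemma FlatAt.const_mul (hf : FlatAt f x) (c : ℝ) : FlatAt (fun y => c * f y) x :=
  (IsLittleO.const_mul_left hf c).congr_left fun y => by ring

lemma flatAt_iff_eventually :
    FlatAt f x ↔ ∀ ε > 0, ∀ᶠ y in 𝓝 x, |f y - f x| ≤ ε * dist y x := by
  simp only [FlatAt, isLittleO_iff, Real.norm_eq_abs, abs_of_nonneg dist_nonneg, gt_iff_lt]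

lemma flatAt_iff_tendsto :
    FlatAt f x ↔ Tendsto (fun y => |f y - f x| / dist y x) (𝓝[≠] x) (𝓝 0) := by
  rw [FlatAt, ← isLittleO_abs_left, isLittleO_iff_tendsto (by simp +contextual)]
  simpa [ContinuousAt] using continuousAt_iff_punctured_nhds
    (f := fun y => |f y - f x| / dist y x) (a := x)

/-- The normalized oscillation of `f` at scale `r`, whose upper limit as `r → 0` is `lipAt f x`. -/
def scaledOsc (f : Y → ℝ) (x : Y) (r : ℝ) : ℝ :=
  sSup ((fun y => |f y - f x| / r) '' closedBall x r)

lemma scaledOsc_nonneg {r : ℝ} (hr : 0 ≤ r) : 0 ≤ scaledOsc f x r :=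
  Real.sSup_nonneg (by rintro _ ⟨y, -, rfl⟩; positivity)

lemma scaledOsc_le {r c : ℝ} (hr : 0 < r) (h : ∀ y ∈ closedBall x r, |f y - f x| ≤ c * r) :
    scaledOsc f x r ≤ c :=
  csSup_le ((nonempty_closedBall.2 hr.le).image _) <| by
    rintro _ ⟨y, hy, rfl⟩
    exact (div_le_iff₀ hr).2 (h y hy)

lemma abs_sub_le_mul_of_mem_closedBall (hf : LipschitzWith K f) {r : ℝ} {y : Y}
    (hy : y ∈ closedBall x r) : |f y - f x| ≤ K * r :=
  (hf.dist_le_mul y x).trans (mul_le_mul_of_nonneg_left hy K.2)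

lemma abs_sub_le_scaledOsc_mul_dist (hf : LipschitzWith K f) {y : Y} (hyx : x ≠ y) :
    |f y - f x| ≤ scaledOsc f x (dist y x) * dist y x := by
  have hd : 0 < dist y x := dist_pos.2 hyx.symm
  rw [← div_le_iff₀ hd]
  refine le_csSup ⟨K, ?_⟩ ⟨y, mem_closedBall.2 le_rfl, rfl⟩
  rintro _ ⟨z, hz, rfl⟩
  exact (div_le_iff₀ hd).2 (abs_sub_le_mul_of_mem_closedBall hf hz)

lemma flatAt_of_lipAt_nonpos (hf : LipschitzWith K f) (h : lipAt f x ≤ 0) : FlatAt f x := by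
  refine flatAt_iff_eventually.2 fun ε hε => ?_
  have hbdd : IsBoundedUnder (· ≤ ·) (𝓝[>] (0 : ℝ)) (scaledOsc f x) :=
    isBoundedUnder_of_eventually_le (a := (K : ℝ)) <|
      eventually_mem_nhdsWithin.mono fun r hr =>
        scaledOsc_le hr fun y => abs_sub_le_mul_of_mem_closedBall hf
  have hosc : ∀ᶠ r in 𝓝[>] (0 : ℝ), scaledOsc f x r < ε :=
    eventually_lt_of_limsup_lt (h.trans_lt hε) hbdd
  obtain ⟨ρ, hρ, hoscρ⟩ := mem_nhdsGT_iff_exists_Ioo_subset.1 hosc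
  filter_upwards [ball_mem_nhds x hρ] with y hy
  rcases eq_or_ne x y with rfl | hxy
  · simp
  refine (abs_sub_le_scaledOsc_mul_dist hf hxy).trans ?_
  gcongr
  exact (hoscρ ⟨dist_pos.2 hxy.symm, hy⟩).le

lemma FlatAt.lipAt_nonpos (hf : FlatAt f x) : lipAt f x ≤ 0 := by
  refine le_of_forall_gt_imp_ge_of_dense fun ε hε => ?_
  have hnonneg : ∀ᶠ r in 𝓝[>] (0 : ℝ), 0 ≤ scaledOsc f x r :=
    eventually_mem_nhdsWithin.mono fun r hr => scaledOsc_nonneg (le_of_lt hr)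
  refine limsup_le_of_le (isBoundedUnder_of_eventually_ge hnonneg).isCoboundedUnder_le ?_
  obtain ⟨ρ, hρ, hball⟩ := Metric.eventually_nhds_iff.1 (flatAt_iff_eventually.1 hf ε hε)
  filter_upwards [Ioo_mem_nhdsGT hρ] with r hr
  refine scaledOsc_le hr.1 fun y hy => (hball (hy.trans_lt hr.2)).trans ?_
  gcongr
  exact hy

lemma lipAt_nonpos_iff (hf : LipschitzWith K f) : lipAt f x ≤ 0 ↔ FlatAt f x :=
  ⟨flatAt_of_lipAt_nonpos hf, FlatAt.lipAt_nonpos⟩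

end FlatAt

section IndSet

variable {Y : Type*} [MetricSpace Y] {n : ℕ} {φ : Y → E n} {f : Y → ℝ} {x : Y} {K K' : ℝ≥0}

lemma notMem_indSet_iff (hφ : LipschitzWith K φ) :
    x ∉ indSet φ ↔ ∃ D : E n, ‖D‖ = 1 ∧ FlatAt (fun y => ⟪φ y, D⟫) x := by
  have hiff : ∀ D, lipAt (fun y => ⟪φ y, D⟫) x ≤ 0 ↔ FlatAt (fun y => ⟪φ y, D⟫) x := fun D =>
    lipAt_nonpos_iff (((innerSL ℝ).flip D).lipschitz.comp hφ)
  simp only [indSet, mem_ofPred_eq, not_forall, exists_prop, not_lt, hiff]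

lemma FlatAt.eq_zero_of_mem_indSet {D : E n} (h : FlatAt (fun y => ⟪φ y, D⟫) x)
    (hφ : LipschitzWith K φ) (hx : x ∈ indSet φ) : D = 0 := by
  by_contra hD
  refine (notMem_indSet_iff hφ).2 ⟨‖D‖⁻¹ • D, norm_smul_inv_norm hD, ?_⟩ hx
  simpa only [inner_smul_right] using h.const_mul ‖D‖⁻¹

lemma indSet_eq_univ_of_subsingleton [Subsingleton (E n)] (φ : Y → E n) : indSet φ = univ :=
  eq_univ_of_forall fun x D hD => by simp [Subsingleton.elim D 0] at hD

lemma isClosed_setOf_exists_abs_inner_le (hφ : Continuous φ) (r c : ℝ) :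
    IsClosed {x | ∃ D : E n, ‖D‖ = 1 ∧
      ∀ y, dist y x < r → |⟪φ y - φ x, D⟫| ≤ c * dist y x} := by
  let F : Set (Y × sphere (0 : E n) 1) :=
    ⋂ y, {p | r ≤ dist y p.1} ∪ {p | |⟪φ y - φ p.1, p.2⟫| ≤ c * dist y p.1}
  have hF : IsClosed F := isClosed_iInter fun y =>
    (isClosed_le (by fun_prop) (by fun_prop)).union (isClosed_le (by fun_prop) (by fun_prop))
  convert isClosedMap_fst_of_compactSpace F hF using 1
  ext x
  simp [F, or_iff_not_imp_left]

lemma notMem_indSet_iff_forall_nat (hφ : LipschitzWith K φ) :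
    x ∉ indSet φ ↔ ∀ N : ℕ, ∃ m : ℕ, ∃ D : E n, ‖D‖ = 1 ∧
      ∀ y, dist y x < 1 / ((m : ℝ) + 1) →
        |⟪φ y - φ x, D⟫| ≤ 1 / ((N : ℝ) + 1) * dist y x := by
  simp only [notMem_indSet_iff hφ, flatAt_iff_eventually, ← inner_sub_left]
  constructor
  · rintro ⟨D, hD, hflat⟩ N
    obtain ⟨r, hr, hball⟩ := Metric.eventually_nhds_iff.1 (hflat _ (N.one_div_pos_of_nat (α := ℝ)))
    obtain ⟨m, hm⟩ := exists_nat_one_div_lt hr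
    exact ⟨m, D, hD, fun y hy => hball (hy.trans hm)⟩
  intro h
  choose m D hD hball using h
  obtain ⟨D₀, hD₀, g, hg, hlim⟩ := (isCompact_sphere (0 : E n) 1).tendsto_subseq
    (x := D) fun N => by simpa using hD N
  refine ⟨D₀, by simpa using hD₀, fun ε hε => ?_⟩
  have hsmall : Tendsto (fun i => 1 / ((g i : ℝ) + 1) + K * ‖D (g i) - D₀‖) atTop
      (𝓝 (0 + K * 0)) :=
    (tendsto_one_div_add_atTop_nhds_zero_nat.comp hg.tendsto_atTop).add
      ((tendsto_iff_norm_sub_tendsto_zero.1 hlim).const_mul _)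
  obtain ⟨i, hi⟩ := (hsmall.eventually_lt_const (by simpa using hε)).exists
  filter_upwards [ball_mem_nhds x ((m (g i)).one_div_pos_of_nat (α := ℝ))] with y hy
  have hφy : ‖φ y - φ x‖ ≤ K * dist y x := by simpa only [dist_eq_norm] using hφ.dist_le_mul y x
  calc |⟪φ y - φ x, D₀⟫| = |⟪φ y - φ x, D (g i)⟫ - ⟪φ y - φ x, D (g i) - D₀⟫| := by
        rw [← inner_sub_right, _root_.sub_sub_cancel]
    _ ≤ |⟪φ y - φ x, D (g i)⟫| + |⟪φ y - φ x, D (g i) - D₀⟫| := abs_sub _ _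
    _ ≤ 1 / ((g i : ℝ) + 1) * dist y x + K * dist y x * ‖D (g i) - D₀‖ := by
        gcongr
        · exact hball _ y hy
        · exact (abs_real_inner_le_norm _ _).trans (by gcongr)
    _ = (1 / ((g i : ℝ) + 1) + K * ‖D (g i) - D₀‖) * dist y x := by ring
    _ ≤ ε * dist y x := by gcongr

lemma measurableSet_indSet [MeasurableSpace Y] [BorelSpace Y] (hφ : LipschitzWith K φ) :
    MeasurableSet (indSet φ) := by
  have : indSet φ = (⋂ N : ℕ, ⋃ m : ℕ, {x | ∃ D : E n, ‖D‖ = 1 ∧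
      ∀ y, dist y x < 1 / ((m : ℝ) + 1) →
        |⟪φ y - φ x, D⟫| ≤ 1 / ((N : ℝ) + 1) * dist y x})ᶜ := by
    ext x
    rw [mem_compl_iff, ← not_iff_not, not_not, notMem_indSet_iff_forall_nat hφ]
    simp only [mem_iInter, mem_iUnion, mem_ofPred_eq]
  rw [this]
  exact (MeasurableSet.iInter fun N => .iUnion fun m =>
    (isClosed_setOf_exists_abs_inner_le hφ.continuous _ _).measurableSet).compl

/-- The map `(φ, f)` into `ℝⁿ⁺¹`. -/
def adjoin {Y : Type*} {n : ℕ} (φ : Y → E n) (f : Y → ℝ) (y : Y) : E (n + 1) :=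
  WithLp.toLp 2 (Fin.snoc (α := fun _ => ℝ) (φ y) (f y))

lemma exists_lipschitzWith_adjoin (hφ : LipschitzWith K φ) (hf : LipschitzWith K' f) :
    ∃ L, LipschitzWith L (adjoin φ f) := by
  have hcoord : LipschitzWith (max K K') fun y =>
      (Fin.snoc (α := fun _ => ℝ) (φ y) (f y) : Fin (n + 1) → ℝ) := by
    refine LipschitzWith.of_dist_le_mul fun x y => (dist_pi_le_iff (by positivity)).2 fun i => ?_
    refine Fin.lastCases ?_ (fun i => ?_) i
    · simpa only [Fin.snoc_last] using (hf.weaken (le_max_right K K')).dist_le_mul x y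
    · simp only [Fin.snoc_castSucc]
      exact (PiLp.dist_apply_le _ _ i).trans ((hφ.weaken (le_max_left K K')).dist_le_mul x y)
  exact ⟨_, (PiLp.lipschitzWith_toLp 2 _).comp hcoord⟩

lemma inner_adjoin {Y : Type*} (φ : Y → E n) (f : Y → ℝ) (D : E (n + 1)) (y : Y) :
    ⟪adjoin φ f y, D⟫ =
      ⟪φ y, WithLp.toLp 2 fun i => D (Fin.castSucc i)⟫ + f y * D (Fin.last n) := by
  simp only [PiLp.inner_apply, Fin.sum_univ_castSucc, adjoin, Fin.snoc_castSucc, Fin.snoc_last,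
    RCLike.inner_apply, conj_trivial, mul_comm]

lemma diffWrtAt_iff_existsUnique_flatAt :
    DiffWrtAt φ f x ↔ ∃! T : E n →ₗ[ℝ] ℝ, FlatAt (fun y => f y - T (φ y)) x := by
  have heq : ∀ (T : E n →ₗ[ℝ] ℝ) y, f y - f x - T (φ y - φ x) = f y - T (φ y) - (f x - T (φ x)) :=
    fun T y => by rw [map_sub]; ring
  simp only [DiffWrtAt, flatAt_iff_tendsto, heq]

lemma eq_of_flatAt_sub (hφ : LipschitzWith K φ) (hx : x ∈ indSet φ) {T T' : E n →ₗ[ℝ] ℝ}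
    (hT : FlatAt (fun y => f y - T (φ y)) x) (hT' : FlatAt (fun y => f y - T' (φ y)) x) :
    T = T' := by
  let D : E n := (InnerProductSpace.toDual ℝ (E n)).symm (T - T').toContinuousLinearMap
  have hD : ∀ z, ⟪z, D⟫ = (T - T') z := fun z => by
    rw [real_inner_comm, InnerProductSpace.toDual_symm_apply, LinearMap.coe_toContinuousLinearMap']
  have hflat : FlatAt (fun y => ⟪φ y, D⟫) x := by
    simpa only [_root_.sub_sub_sub_cancel_left, LinearMap.sub_apply, hD] using hT'.sub hT
  have hD0 := hflat.eq_zero_of_mem_indSet hφ hx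
  exact sub_eq_zero.1 (LinearMap.ext fun z => by rw [← hD, hD0, inner_zero_right]; rfl)

lemma exists_flatAt_sub (hφ : LipschitzWith K φ) (hf : LipschitzWith K' f) (hx : x ∈ indSet φ)
    (hxf : x ∉ indSet (adjoin φ f)) :
    ∃ T : E n →ₗ[ℝ] ℝ, FlatAt (fun y => f y - T (φ y)) x := by
  obtain ⟨L, hL⟩ := exists_lipschitzWith_adjoin hφ hf
  obtain ⟨D, hD, hflat⟩ := (notMem_indSet_iff hL).1 hxf
  simp only [inner_adjoin] at hflat
  set D' : E n := WithLp.toLp 2 fun i => D (Fin.castSucc i)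
  have hlast : D (Fin.last n) ≠ 0 := by
    intro h0
    simp only [h0, mul_zero, add_zero] at hflat
    have hD'0 : D' = 0 := hflat.eq_zero_of_mem_indSet hφ hx
    have hD0 : D = 0 := by
      ext i
      exact Fin.lastCases h0 (fun i => congrArg (fun z : E n => z i) hD'0) i
    simp [hD0] at hD
  refine ⟨-(D (Fin.last n))⁻¹ • (innerSL ℝ D').toLinearMap, ?_⟩
  convert hflat.const_mul (D (Fin.last n))⁻¹ using 2 with y
  simp only [LinearMap.smul_apply, ContinuousLinearMap.coe_coe, innerSL_apply_apply, smul_eq_mul,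
    real_inner_comm]
  field_simp
  ring

-- A vanishing first-order relation between `φ` and `f` must involve `f`, because the
-- components of `φ` are independent at `x`.
theorem diffWrtAt_of_mem_indSet (hφ : LipschitzWith K φ) (hf : LipschitzWith K' f)
    (hx : x ∈ indSet φ) (hxf : x ∉ indSet (adjoin φ f)) : DiffWrtAt φ f x := by
  obtain ⟨T, hT⟩ := exists_flatAt_sub hφ hf hx hxf
  exact diffWrtAt_iff_existsUnique_flatAt.2
    ⟨T, hT, fun _ hT' => eq_of_flatAt_sub hφ hx hT' hT⟩

end IndSet

/-! ### Charts -/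

lemma exists_countable_ae_cover {Ω ι : Type*} [MeasurableSpace Ω] (μ : Measure Ω) [SFinite μ]
    {A : ι → Set Ω} (hA : ∀ i, MeasurableSet (A i)) :
    ∃ c : Set ι, c.Countable ∧ ∀ i, μ (A i \ ⋃ j ∈ c, A j) = 0 := by
  let ν := μ.toFinite
  let m : Set ι → ℝ≥0∞ := fun c => ν (⋃ j ∈ c, A j)
  obtain ⟨u, -, hu, huc⟩ := exists_seq_tendsto_sSup
    (S := m '' {c | c.Countable}) ⟨_, ∅, countable_empty, rfl⟩ (OrderTop.bddAbove _)
  choose c hc hcu using huc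
  have hcount : (⋃ k, c k).Countable := countable_iUnion hc
  have hmax : ∀ c', c'.Countable → m c' ≤ m (⋃ k, c k) := fun c' hc' =>
    (le_sSup (mem_image_of_mem m hc')).trans <| le_of_tendsto' hu fun k => hcu k ▸
      measure_mono (biUnion_subset_biUnion_left (subset_iUnion c k))
  refine ⟨⋃ k, c k, hcount, fun i => absolutelyContinuous_toFinite μ ?_⟩
  set U := ⋃ j ∈ ⋃ k, c k, A j
  have hadd : ν U + ν (A i \ U) ≤ ν U := by
    calc ν U + ν (A i \ U) = ν (A i ∪ U) := by
          rw [← measure_union disjoint_sdiff_right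
            ((hA i).diff (.biUnion hcount fun j _ => hA j)), union_sdiff_self, union_comm]
      _ = m (insert i (⋃ k, c k)) := congrArg ν (biUnion_insert _ _ _).symm
      _ ≤ ν U := hmax _ (hcount.insert i)
  by_contra hne
  exact (ENNReal.lt_add_right (measure_ne_top ν U) hne).not_ge hadd

section Charts

variable {Y : Type*} [MetricSpace Y] [MeasurableSpace Y] {μ : Measure Y}

lemma IsLipDiffSpaceWith.mono {P Q : ℕ → Prop} (h : IsLipDiffSpaceWith μ P)
    (hPQ : ∀ k, P k → Q k) : IsLipDiffSpaceWith μ Q := by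
  obtain ⟨N, U, φ, hN, hrest⟩ := h
  exact ⟨N, U, φ, fun i => hPQ _ (hN i), hrest⟩

-- The uncovered null set is itself made into a chart, of dimension `0`.
lemma IsLipDiffSpaceWith.of_ae_cover {ι : Type*} [Countable ι] {P : ℕ → Prop} {N : ι → ℕ}
    {U : ι → Set Y} {φ : (i : ι) → Y → E (N i)} (hP : P 0) (hN : ∀ i, P (N i))
    (hU : ∀ i, MeasurableSet (U i)) (hcover : μ (⋃ i, U i)ᶜ = 0)
    (hφ : ∀ i, ∃ K, LipschitzWith K (φ i))
    (hdiff : ∀ i f, (∃ K, LipschitzWith K f) → ∀ᵐ x ∂μ, x ∈ U i → DiffWrtAt (φ i) f x) :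
    IsLipDiffSpaceWith μ P := by
  let N' : Option ι → ℕ := fun o => o.elim 0 N
  let U' : Option ι → Set Y := fun o => o.elim (⋃ i, U i)ᶜ U
  let φ' : (o : Option ι) → Y → E (N' o) := fun o => o.rec (fun _ => 0) φ
  have hN' : ∀ o, P (N' o) := by
    rintro (_ | i)
    exacts [hP, hN i]
  have hU' : ∀ o, MeasurableSet (U' o) := by
    rintro (_ | i)
    exacts [(MeasurableSet.iUnion hU).compl, hU i]
  have hφ' : ∀ o, ∃ K, LipschitzWith K (φ' o) := by
    rintro (_ | i)
    exacts [⟨0, .const 0⟩, hφ i]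
  have hdiff' : ∀ f, (∃ K, LipschitzWith K f) →
      ∀ o, ∀ᵐ x ∂μ, x ∈ U' o → DiffWrtAt (φ' o) f x := by
    rintro f hf (_ | i)
    · filter_upwards [measure_eq_zero_iff_ae_notMem.1 hcover] with x hx hxU using absurd hxU hx
    · exact hdiff i f hf
  have hUnion : ⋃ o, U' o = univ := by rw [iUnion_option]; exact compl_union_self _
  obtain ⟨e, he⟩ := exists_surjective_nat (Option ι)
  exact ⟨fun k => N' (e k), fun k => U' (e k), fun k => φ' (e k), fun k => hN' (e k),
    fun k => hU' (e k), (he.iUnion_comp U').trans hUnion, fun k => hφ' (e k),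
    fun f hf k => hdiff' f hf (e k)⟩

variable [BorelSpace Y]

lemma exists_countable_indSet_cover (μ : Measure Y) [SFinite μ] (n : ℕ) :
    ∃ c : Set {φ : Y → E n // ∃ K, LipschitzWith K φ}, c.Countable ∧
      ∀ φ : Y → E n, (∃ K, LipschitzWith K φ) → μ (indSet φ \ ⋃ ψ ∈ c, indSet ψ.1) = 0 := by
  obtain ⟨c, hc, hcover⟩ := exists_countable_ae_cover μ
    (A := fun φ : {φ : Y → E n // ∃ K, LipschitzWith K φ} => indSet φ.1)
    fun φ => measurableSet_indSet φ.2.choose_spec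
  exact ⟨c, hc, fun φ hφ => hcover ⟨φ, hφ⟩⟩

lemma exists_mem_sdiff_succ {α : Type*} {G : ℕ → Set α} {N : ℕ} {x : α} (h₀ : x ∈ G 0)
    (hN : x ∉ G N) : ∃ n : Fin N, x ∈ G n \ G (n + 1) := by
  by_contra! hstep
  have hmem : ∀ n ≤ N, x ∈ G n := by
    intro n hn
    induction n with
    | zero => exact h₀
    | succ n ih =>
      by_contra hxn
      exact hstep ⟨n, hn⟩ ⟨ih (by omega), hxn⟩
  exact hN (hmem N le_rfl)

theorem isLipDiffSpaceWith_of_indSet_null [SFinite μ] {N : ℕ}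
    (h : ∀ φ : Y → E (N + 1), (∃ K, LipschitzWith K φ) → μ (indSet φ) = 0) :
    IsLipDiffSpaceWith μ (· ≤ N) := by
  choose c hc hmax using fun n => exists_countable_indSet_cover μ n
  let G : ℕ → Set Y := fun n => ⋃ ψ ∈ c n, indSet ψ.1
  let U : (Σ n : Fin (N + 1), c n) → Set Y := fun i => indSet i.2.1.1 \ G (i.1 + 1)
  have := fun n => (hc n).to_subtype
  have hmeas {n} (ψ : {φ : Y → E n // ∃ K, LipschitzWith K φ}) : MeasurableSet (indSet ψ.1) :=
    measurableSet_indSet ψ.2.choose_spec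
  have hG₀ : μ (G 0)ᶜ = 0 := by
    have hmax₀ := hmax 0 (fun _ => 0) ⟨0, .const 0⟩
    rwa [indSet_eq_univ_of_subsingleton, ← compl_eq_univ_sdiff] at hmax₀
  have hGN : μ (G (N + 1)) = 0 := (measure_biUnion_null_iff (hc _)).2 fun ψ _ => h ψ.1 ψ.2
  have hcover : (⋃ i, U i)ᶜ ⊆ (G 0)ᶜ ∪ G (N + 1) := by
    intro x hx
    by_contra! hxG
    simp only [mem_union, mem_compl_iff, not_or, not_not] at hxG
    obtain ⟨n, hxn, hxn'⟩ := exists_mem_sdiff_succ hxG.1 hxG.2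
    obtain ⟨ψ, hψ, hxψ⟩ := mem_iUnion₂.1 hxn
    exact hx (mem_iUnion.2 ⟨⟨n, ⟨ψ, hψ⟩⟩, hxψ, hxn'⟩)
  refine .of_ae_cover (U := U) (φ := fun i => i.2.1.1) N.zero_le
    (fun i => Nat.lt_succ_iff.1 i.1.2)
    (fun i => (hmeas _).diff (.biUnion (hc _) fun ψ _ => hmeas ψ))
    (measure_mono_null hcover (measure_union_null hG₀ hGN)) (fun i => i.2.1.2) ?_
  rintro ⟨n, ⟨ψ, K, hψ⟩, -⟩ f ⟨K', hf⟩
  filter_upwards [measure_eq_zero_iff_ae_notMem.1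
    (hmax _ _ (exists_lipschitzWith_adjoin hψ hf))] with x hx hxU
  exact diffWrtAt_of_mem_indSet hψ hf hxU.1 fun hxf => hx ⟨hxf, hxU.2⟩

end Charts

lemma exists_nat_le_lt_add_one {d : ℝ≥0∞} (hd : d < ⊤) :
    ∃ N : ℕ, (N : ℝ≥0∞) ≤ d ∧ d < (N + 1 : ℕ) := by
  lift d to ℝ≥0 using hd.ne
  exact ⟨⌊d⌋₊, by exact_mod_cast Nat.floor_le zero_le, by exact_mod_cast Nat.lt_floor_add_one d⟩

theorem lipDiff_of_singular_null_general {Y : Type*} [MetricSpace Y] [MeasurableSpace Y]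
    [BorelSpace Y] (μ : Measure Y) [SFinite μ] (hdim : dimH (univ : Set Y) < ⊤)
    (h : ∀ (n : ℕ) (φ : Y → E n), (∃ K, LipschitzWith K φ) → MemScal φ univ → μ (indSet φ) = 0) :
    IsLipDiffSpaceWith μ (fun k => (k : ℝ≥0∞) ≤ dimH (univ : Set Y)) := by
  obtain ⟨N, hN, hdimN⟩ := exists_nat_le_lt_add_one hdim
  have hnull : ∀ φ : Y → E (N + 1), (∃ K, LipschitzWith K φ) → μ (indSet φ) = 0 := by
    rintro φ ⟨K, hφ⟩
    exact h _ φ ⟨K, hφ⟩ (memScal_univ hφ hdimN)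
  exact (isLipDiffSpaceWith_of_indSet_null hnull).mono fun k hk => (Nat.cast_le.2 hk).trans hN

/-- If `dim_H X < ∞` and `μ(S ∩ ind φ) = 0` for every `n`, every
Lipschitz `φ : X → ℝⁿ` and every `S ∈ 𝒮(φ)`, then `(X,d,μ)` is a Lipschitz
differentiability space with chart dimensions at most `dim_H X`. -/
theorem lipDiff_of_singular_null (μ : Measure X) [SigmaFinite μ]
    (hdim : dimH (Set.univ : Set X) < ⊤)
    (h : ∀ (n : ℕ) (φ : X → E n), (∃ K, LipschitzWith K φ) →
      ∀ S : Set X, MemScal φ S → μ (S ∩ indSet φ) = 0) :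
    IsLipDiffSpaceWith μ (fun k => (k : ℝ≥0∞) ≤ dimH (Set.univ : Set X)) :=
  lipDiff_of_singular_null_general μ hdim fun n φ hφ hS => by
    simpa only [univ_inter] using h n φ hφ univ hS

end BKO
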